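/- arXiv:2106.06710 — 4 statements merged into one kernel-verified Lean document; each statement's English description precedes it below -/
import Mathlib

section
/- Let k ≥ 3 be an odd integer. A finite simple connected graph G is k-periodic if and only if G is isomorphic to the cycle graph C_k. -/
open Matrix

attribute [local instance] Classical.propDecidable

namespace GroverPaper

variable {V : Type*}

/-- The arc set of a simple graph: ordered pairs of adjacent vertices. -/
abbrev Arc (G : SimpleGraph V) : Type _ := {p : V × V // G.Adj p.1 p.2}

/-- The time evolution matrix of the Grover walk on a graph `G`. -/
noncomputable def groverU [Fintype V] (G : SimpleGraph V) :
    Matrix (Arc G) (Arc G) ℂ := fun e f =>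
  if f.val.2 = e.val.1 then
    if e.val = (f.val.2, f.val.1) then 2 / (G.degree f.val.2 : ℂ) - 1
    else 2 / (G.degree f.val.2 : ℂ)
  else 0

/-- A graph is periodic if some positive power of its Grover evolution is the identity. -/
def IsPeriodic [Fintype V] (G : SimpleGraph V) : Prop :=
  ∃ k : ℕ, 0 < k ∧ groverU G ^ k = 1

/-- The period of a periodic graph: the least positive `k` with `U^k = 1`. -/
noncomputable def period [Fintype V] (G : SimpleGraph V) : ℕ :=
  sInf {k : ℕ | 0 < k ∧ groverU G ^ k = 1}

/-- A graph is `k`-periodic if it is periodic with period `k`. -/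
def IsKPeriodic [Fintype V] (G : SimpleGraph V) (k : ℕ) : Prop :=
  IsPeriodic G ∧ period G = k

/-- A graph is odd-periodic if it is periodic with odd period. -/
def IsOddPeriodic [Fintype V] (G : SimpleGraph V) : Prop :=
  IsPeriodic G ∧ Odd (period G)

/-- The transition matrix of the isotropic random walk on `G`. -/
noncomputable def transition [Fintype V] (G : SimpleGraph V) :
    Matrix V V ℝ := fun u v =>
  if G.Adj u v then 1 / (G.degree u : ℝ) else 0

section

open Finset

/-- The inverse of an arc. -/
def Arc.rev {G : SimpleGraph V} (e : Arc G) : Arc G := ⟨(e.1.2, e.1.1), e.2.symm⟩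

@[simp] lemma Arc.rev_fst {G : SimpleGraph V} (e : Arc G) : e.rev.1.1 = e.1.2 := rfl

@[simp] lemma Arc.rev_snd {G : SimpleGraph V} (e : Arc G) : e.rev.1.2 = e.1.1 := rfl

@[simp] lemma Arc.rev_rev {G : SimpleGraph V} (e : Arc G) : e.rev.rev = e := rfl

lemma Arc.rev_ne {G : SimpleGraph V} (e : Arc G) : e.rev ≠ e := fun h =>
  e.2.ne (congrArg (fun x : Arc G => x.1.2) h)

lemma Arc.eq_rev_iff {G : SimpleGraph V} (e f : Arc G) : e = f.rev ↔ f = e.rev := by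
  constructor <;> rintro rfl <;> simp

variable [Fintype V] (G : SimpleGraph V)

lemma sum_arc_snd {M : Type*} [AddCommMonoid M] (u : V) (φ : V → V → M) :
    ∑ f : Arc G, (if f.1.2 = u then φ f.1.1 f.1.2 else 0) = ∑ w ∈ G.neighborFinset u, φ w u := by
  rw [← Finset.sum_filter]
  refine Finset.sum_bij' (fun f _ => f.1.1)
    (fun w hw => ⟨(w, u), ((G.mem_neighborFinset u w).1 hw).symm⟩) ?_ ?_ ?_ ?_ ?_
  · rintro ⟨⟨a, b⟩, hf⟩ h
    simp only [mem_filter, mem_univ, true_and] at h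
    subst h
    exact (G.mem_neighborFinset _ _).2 hf.symm
  · simp
  · rintro ⟨⟨a, b⟩, hf⟩ h
    simp only [mem_filter, mem_univ, true_and] at h
    subst h
    rfl
  · simp
  · rintro ⟨⟨a, b⟩, hf⟩ h
    simp only [mem_filter, mem_univ, true_and] at h
    subst h
    rfl

lemma sum_arc_snd_eq_sum_degree {M : Type*} [AddCommMonoid M] (φ : V → M) :
    ∑ f : Arc G, φ f.1.2 = ∑ v, G.degree v • φ v := by
  have h : ∀ v, ∑ f : Arc G, (if f.1.2 = v then φ f.1.2 else 0) = G.degree v • φ v := by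
    intro v
    rw [sum_arc_snd G v (fun _ x => φ x), Finset.sum_const, SimpleGraph.card_neighborFinset_eq_degree]
  simp_rw [← h]
  rw [Finset.sum_comm]
  simp

lemma groverU_apply (e f : Arc G) :
    groverU G e f = (if f.1.2 = e.1.1 then 2 / (G.degree e.1.1 : ℂ) else 0)
      - (if f = e.rev then 1 else 0) := by
  have h : (e.val = (f.val.2, f.val.1)) ↔ f = e.rev := by
    rw [Arc.eq_rev_iff, Subtype.ext_iff]; rfl
  unfold groverU
  simp only [h]
  by_cases h1 : f.1.2 = e.1.1
  · rw [if_pos h1, if_pos h1, h1]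
    split_ifs <;> simp
  · have h2 : f ≠ e.rev := by rintro rfl; exact h1 rfl
    simp [h1, h2]

lemma groverU_mulVec_apply (φ : V → V → ℂ) (e : Arc G) :
    (groverU G *ᵥ fun f => φ f.1.1 f.1.2) e =
      2 / (G.degree e.1.1 : ℂ) * (∑ w ∈ G.neighborFinset e.1.1, φ w e.1.1) - φ e.1.2 e.1.1 := by
  simp only [mulVec, dotProduct, groverU_apply, sub_mul, Finset.sum_sub_distrib, ite_mul, zero_mul,
    one_mul, Finset.sum_ite_eq', mem_univ, if_true]
  rw [sum_arc_snd G e.1.1 (fun a b => 2 / (G.degree e.1.1 : ℂ) * φ a b), Finset.mul_sum]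
  simp

lemma degree_pos_of_arc (e : Arc G) : 0 < G.degree e.1.1 :=
  (G.degree_pos_iff_exists_adj _).2 ⟨_, e.2⟩

lemma groverU_mulVec_snd (g : V → ℂ) :
    (groverU G *ᵥ fun f => g f.1.2) = fun e => g e.1.1 := by
  ext e
  have hd : (G.degree e.1.1 : ℂ) ≠ 0 := by exact_mod_cast (degree_pos_of_arc G e).ne'
  rw [groverU_mulVec_apply G (fun _ x => g x)]
  rw [Finset.sum_const, SimpleGraph.card_neighborFinset_eq_degree, nsmul_eq_mul]
  field_simp
  ring

lemma groverU_mulVec_fst {g : V → ℂ} {r : ℂ}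
    (hg : ∀ u, 2 * ∑ w ∈ G.neighborFinset u, g w = r * G.degree u * g u) :
    (groverU G *ᵥ fun f => g f.1.1) = fun e => r * g e.1.1 - g e.1.2 := by
  ext e
  have hd : (G.degree e.1.1 : ℂ) ≠ 0 := by exact_mod_cast (degree_pos_of_arc G e).ne'
  rw [groverU_mulVec_apply G (fun x _ => g x), div_mul_eq_mul_div, hg]
  field_simp

/-- The flip-flop shift matrix, sending an arc to its inverse. -/
noncomputable def shiftMatrix : Matrix (Arc G) (Arc G) ℂ := fun e f => if f = e.rev then 1 else 0

lemma shiftMatrix_mul_apply (M : Matrix (Arc G) (Arc G) ℂ) (e f : Arc G) :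
    (shiftMatrix G * M) e f = M e.rev f := by
  simp [Matrix.mul_apply, shiftMatrix]

lemma shiftMatrix_mul_self : shiftMatrix G * shiftMatrix G = 1 := by
  ext e f
  rw [shiftMatrix_mul_apply, Matrix.one_apply, shiftMatrix, Arc.rev_rev]
  simp only [eq_comm]

lemma trace_shiftMatrix : (shiftMatrix G).trace = 0 := by
  refine Finset.sum_eq_zero fun e _ => ?_
  simp only [Matrix.diag_apply, shiftMatrix]
  rw [if_neg e.rev_ne.symm]

lemma shiftMatrix_mul_groverU_apply (e f : Arc G) :
    (shiftMatrix G * groverU G) e f =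
      (if f.1.2 = e.1.2 then 2 / (G.degree e.1.2 : ℂ) else 0) - (if f = e then 1 else 0) := by
  rw [shiftMatrix_mul_apply, groverU_apply]
  rfl

lemma shiftMatrix_mul_groverU_mul_self :
    (shiftMatrix G * groverU G) * (shiftMatrix G * groverU G) = 1 := by
  ext e f
  have hd : (G.degree e.1.2 : ℂ) ≠ 0 := by exact_mod_cast (degree_pos_of_arc G e.rev).ne'
  have key : ∀ x : Arc G, (shiftMatrix G * groverU G) e x * (shiftMatrix G * groverU G) x f =
      (if x.1.2 = e.1.2 then (if f.1.2 = e.1.2 then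
        2 / (G.degree e.1.2 : ℂ) * (2 / (G.degree e.1.2 : ℂ)) else 0) else 0)
      - (if f = x then (if x.1.2 = e.1.2 then 2 / (G.degree e.1.2 : ℂ) else 0) else 0)
      - (if x = e then (shiftMatrix G * groverU G) x f else 0) := by
    intro x
    simp only [shiftMatrix_mul_groverU_apply]
    by_cases h1 : x.1.2 = e.1.2
    · rw [h1]
      split_ifs <;> ring
    · have : x ≠ e := by rintro rfl; exact h1 rfl
      simp [h1, this]
  rw [Matrix.mul_apply, Finset.sum_congr rfl fun x _ => key x, Finset.sum_sub_distrib,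
    Finset.sum_sub_distrib, Finset.sum_ite_eq' univ e, Finset.sum_ite_eq univ f,
    sum_arc_snd G e.1.2 (fun _ _ => _), Finset.sum_const,
    SimpleGraph.card_neighborFinset_eq_degree, shiftMatrix_mul_groverU_apply, Matrix.one_apply]
  by_cases h1 : f.1.2 = e.1.2
  · simp only [mem_univ, if_true, if_pos h1, nsmul_eq_mul, @eq_comm _ f e]
    field_simp
    ring
  · have : e ≠ f := by rintro rfl; exact h1 rfl
    simp [h1, this, this.symm]

lemma trace_shiftMatrix_mul_groverU (hpos : ∀ v, 0 < G.degree v) :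
    (shiftMatrix G * groverU G).trace = 2 * Fintype.card V - ∑ v, (G.degree v : ℂ) := by
  have : (shiftMatrix G * groverU G).trace = ∑ e : Arc G, (2 / (G.degree e.1.2 : ℂ) - 1) := by
    refine Finset.sum_congr rfl fun e _ => ?_
    rw [Matrix.diag_apply, shiftMatrix_mul_groverU_apply]
    simp
  rw [this, sum_arc_snd_eq_sum_degree G (fun v => 2 / (G.degree v : ℂ) - 1)]
  have : ∀ v, G.degree v • (2 / (G.degree v : ℂ) - 1) = 2 - (G.degree v : ℂ) := by
    intro v
    have : (G.degree v : ℂ) ≠ 0 := by exact_mod_cast (hpos v).ne'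
    rw [nsmul_eq_mul]
    field_simp
  simp [this, mul_comm]

lemma trace_eq_of_involutions {n : Type*} [Fintype n] [DecidableEq n] {S C : Matrix n n ℂ}
    (hS : S * S = 1) (hC : C * C = 1) (j : ℕ) (h : (S * C) ^ (2 * j + 1) = 1) :
    C.trace = S.trace := by
  have hinv : ∀ a : ℕ, (S * C) ^ a * (C * S) ^ a = 1 := by
    intro a
    induction a with
    | zero => simp
    | succ a ih =>
      rw [pow_succ, pow_succ', mul_assoc, ← mul_assoc (S * C) (C * S)]
      rw [mul_assoc S C (C * S), ← mul_assoc C C S, hC, one_mul, hS, one_mul, ih]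
  have hcomm : ∀ a : ℕ, S * (S * C) ^ a = (C * S) ^ a * S := by
    intro a
    induction a with
    | zero => simp
    | succ a ih =>
      rw [pow_succ, ← mul_assoc, ih, pow_succ, mul_assoc, mul_assoc, ← mul_assoc S S, hS]
      rw [mul_assoc C, hS, one_mul, mul_one]
  have h2 : C = (C * S) ^ (j + 1) * S * (S * C) ^ (j + 1) := by
    calc C = S * (S * C) := by rw [← mul_assoc, hS, one_mul]
      _ = S * ((S * C) * (S * C) ^ (2 * j + 1)) := by rw [h, mul_one]
      _ = S * ((S * C) ^ (j + 1) * (S * C) ^ (j + 1)) := by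
        rw [← pow_succ', ← pow_add]; congr 2; ring
      _ = _ := by rw [← mul_assoc, hcomm]
  rw [h2, Matrix.trace_mul_comm, ← mul_assoc, hinv, one_mul]

lemma sum_degrees_eq_of_groverU_pow_eq_one (hpos : ∀ v, 0 < G.degree v) {k : ℕ} (hk : Odd k)
    (h : groverU G ^ k = 1) : ∑ v, G.degree v = 2 * Fintype.card V := by
  obtain ⟨j, rfl⟩ := hk
  have hU : groverU G = shiftMatrix G * (shiftMatrix G * groverU G) := by
    rw [← mul_assoc, shiftMatrix_mul_self, one_mul]
  have := trace_eq_of_involutions (shiftMatrix_mul_self G) (shiftMatrix_mul_groverU_mul_self G) j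
    (by rw [← hU, h])
  rw [trace_shiftMatrix, trace_shiftMatrix_mul_groverU G hpos, sub_eq_zero] at this
  exact_mod_cast this.symm

lemma matrix_pow_apply_of_iterate {n R : Type*} [Fintype n] [DecidableEq n] [Semiring R]
    {M : Matrix n n R} {σ : n → n} (h : ∀ e f, M e f = if e = σ f then 1 else 0) (j : ℕ) (e f : n) :
    (M ^ j) e f = if e = σ^[j] f then 1 else 0 := by
  induction j generalizing e f with
  | zero =>
    rw [pow_zero, Matrix.one_apply]
    congr
  | succ j ih =>
    rw [pow_succ, Matrix.mul_apply]
    simp only [ih, h, mul_ite, mul_one, mul_zero, Finset.sum_ite_eq', mem_univ, if_true,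
      Function.iterate_succ_apply]
    congr

lemma groverU_apply_of_degree_eq_two (hdeg : ∀ v, G.degree v = 2) (e f : Arc G) :
    groverU G e f = if f.1.2 = e.1.1 ∧ f ≠ e.rev then 1 else 0 := by
  rw [groverU_apply, hdeg]
  by_cases h1 : f.1.2 = e.1.1
  · by_cases h2 : f = e.rev <;> simp [h1, h2]
  · have h2 : f ≠ e.rev := by rintro rfl; exact h1 rfl
    simp [h1, h2]

open Fin.CommRing Fin.NatCast in
lemma isKPeriodic_of_iso_cycleGraph {k : ℕ} (hk : 3 ≤ k) (ψ : G ≃g SimpleGraph.cycleGraph k) :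
    IsKPeriodic G k := by
  obtain ⟨m, rfl⟩ := Nat.exists_eq_add_of_le' hk
  have hdeg : ∀ v, G.degree v = 2 := by
    intro v
    have h1 := SimpleGraph.cycleGraph_degree_three_le (n := m) (v := ψ v)
    rw [← h1]
    convert (ψ.degree_eq v).symm
  have hadj : ∀ u v, G.Adj u v ↔ ψ u - ψ v = 1 ∨ ψ v - ψ u = 1 := by
    intro u v
    rw [← SimpleGraph.cycleGraph_adj, ψ.map_adj_iff]
  have h2 : (1 : Fin (m + 3)) + 1 ≠ 0 := by
    intro h
    have := congrArg Fin.val h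
    rw [Fin.val_add, Fin.val_one, Fin.val_zero, Nat.mod_eq_of_lt (by omega)] at this
    omega
  let σ : Arc G → Arc G := fun f => ⟨(f.1.2, ψ.symm (ψ f.1.2 + (ψ f.1.2 - ψ f.1.1))), by
    have := (hadj _ _).1 f.2
    rw [hadj]
    simp only [RelIso.apply_symm_apply]
    rcases this with h | h
    · left; rw [← h]; abel
    · right; rw [← h]; abel⟩
  have hU : ∀ e f, groverU G e f = if e = σ f then 1 else 0 := by
    intro e f
    rw [groverU_apply_of_degree_eq_two G hdeg]
    congr 1
    rw [eq_iff_iff]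
    constructor
    · rintro ⟨h, hne⟩
      have he := (hadj _ _).1 e.2
      have hf := (hadj _ _).1 f.2
      apply Subtype.ext
      apply Prod.ext
      · exact h.symm
      · apply ψ.injective
        simp only [σ, RelIso.apply_symm_apply]
        have hne' : ψ f.1.1 ≠ ψ e.1.2 := by
          intro h'
          apply hne
          apply Subtype.ext
          exact Prod.ext (ψ.injective h') h
        rw [← h] at he
        rcases he with he | he <;> rcases hf with hf | hf
        · linear_combination hf - he
        · exact absurd (by linear_combination he - hf) hne'
        · exact absurd (by linear_combination hf - he) hne'
        · linear_combination he - hf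
    · rintro rfl
      refine ⟨rfl, fun h => ?_⟩
      have h3 : ψ f.1.1 = ψ f.1.2 + (ψ f.1.2 - ψ f.1.1) := by
        have := congrArg (fun x : Arc G => ψ x.1.1) h
        simpa [σ] using this
      rcases (hadj _ _).1 f.2 with hf | hf
      · exact h2 (by linear_combination h3 - 2 * hf)
      · exact h2 (by linear_combination -h3 - 2 * hf)
  have hiter : ∀ (j : ℕ) (f : Arc G), ψ (σ^[j] f).1.1 = ψ f.1.1 + j * (ψ f.1.2 - ψ f.1.1) ∧
      ψ (σ^[j] f).1.2 - ψ (σ^[j] f).1.1 = ψ f.1.2 - ψ f.1.1 := by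
    intro j f
    induction j with
    | zero => simp
    | succ j ih =>
      rw [Function.iterate_succ_apply']
      simp only [σ, RelIso.apply_symm_apply]
      refine ⟨?_, by rw [← ih.2]; ring⟩
      push_cast
      linear_combination ih.1 + ih.2
  have hpow : ∀ j, groverU G ^ j = 1 ↔ (m + 3) ∣ j := by
    intro j
    rw [← Fin.natCast_eq_zero]
    constructor
    · intro h
      have hA : G.Adj (ψ.symm 0) (ψ.symm 1) := by rw [hadj]; simp
      let a : Arc G := ⟨(ψ.symm 0, ψ.symm 1), hA⟩
      have := congrFun (congrFun h a) a
      rw [matrix_pow_apply_of_iterate hU, Matrix.one_apply_eq, ite_eq_left_iff] at this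
      simp only [zero_ne_one, imp_false, not_not] at this
      have h4 := (hiter j a).1
      rw [← this] at h4
      simpa [a] using h4.symm
    · intro h
      have hid : ∀ f, σ^[j] f = f := by
        intro f
        obtain ⟨h5, h6⟩ := hiter j f
        rw [h, zero_mul, add_zero] at h5
        rw [h5, sub_left_inj] at h6
        exact Subtype.ext (Prod.ext (ψ.injective h5) (ψ.injective h6))
      ext e f
      rw [matrix_pow_apply_of_iterate hU, hid, Matrix.one_apply]
  have hmem : (m + 3) ∈ {k : ℕ | 0 < k ∧ groverU G ^ k = 1} := ⟨by omega, (hpow _).2 dvd_rfl⟩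
  refine ⟨⟨_, hmem⟩, le_antisymm (Nat.sInf_le hmem) ?_⟩
  obtain ⟨h7, h8⟩ := Nat.sInf_mem (⟨_, hmem⟩ : {k : ℕ | 0 < k ∧ groverU G ^ k = 1}.Nonempty)
  exact Nat.le_of_dvd h7 ((hpow _).1 h8)

lemma iso_cycleGraph_of_degree_eq_two (hconn : G.Connected) (hdeg : ∀ v, G.degree v = 2) :
    3 ≤ Fintype.card V ∧ Nonempty (G ≃g SimpleGraph.cycleGraph (Fintype.card V)) := by
  have hcyc : G.IsCycles := by
    intro v _
    rw [Set.ncard_eq_toFinset_card', ← hdeg v]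
    simp [SimpleGraph.degree, SimpleGraph.neighborFinset]
  obtain ⟨v⟩ := hconn.nonempty
  have hne : (G.neighborSet v).Nonempty :=
    (G.degree_pos_iff_exists_adj v).1 (by rw [hdeg]; norm_num)
  obtain ⟨p, hp, hverts⟩ := hcyc.exists_cycle_toSubgraph_verts_eq_connectedComponentSupp
    (c := G.connectedComponentMk v) rfl hne
  have hmem : ∀ u, u ∈ p.support := by
    intro u
    rw [← SimpleGraph.Walk.mem_verts_toSubgraph, hverts]
    exact SimpleGraph.ConnectedComponent.sound (hconn.preconnected u v)
  have hlen : p.length = Fintype.card V := by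
    have h1 : p.support.tail.toFinset = univ := by
      ext u
      simp only [List.mem_toFinset, mem_univ, iff_true]
      have hu := hmem u
      rw [← SimpleGraph.Walk.cons_tail_support, List.mem_cons] at hu
      rcases hu with rfl | hu
      · exact SimpleGraph.Walk.end_mem_tail_support hp.not_nil
      · exact hu
    rw [← Finset.card_univ, ← h1, List.toFinset_card_of_nodup hp.support_nodup]
    simp
  have h3 : 3 ≤ Fintype.card V := hlen ▸ hp.three_le_length
  refine ⟨h3, ?_⟩
  obtain ⟨f⟩ := (SimpleGraph.cycleGraph_isContained_iff (G := G) (n := Fintype.card V) h3).2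
    ⟨v, p, hp, hlen⟩
  have hbij : Function.Bijective f :=
    (Fintype.bijective_iff_injective_and_card f).2 ⟨f.injective, by simp⟩
  obtain ⟨m, hm⟩ := Nat.exists_eq_add_of_le' h3
  have hcdeg : ∀ a, (SimpleGraph.cycleGraph (Fintype.card V)).degree a = 2 := by
    rw [hm]
    intro a
    convert SimpleGraph.cycleGraph_degree_three_le (n := m) (v := a)
  refine ⟨(RelIso.symm ⟨Equiv.ofBijective f hbij, ?_⟩)⟩
  intro a b
  refine ⟨fun h => ?_, fun h => f.toHom.map_adj h⟩
  have hsub : ((SimpleGraph.cycleGraph (Fintype.card V)).neighborFinset a).image f =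
      G.neighborFinset (f a) := by
    apply Finset.eq_of_subset_of_card_le
    · intro x hx
      obtain ⟨c, hc, rfl⟩ := Finset.mem_image.1 hx
      rw [SimpleGraph.mem_neighborFinset] at hc ⊢
      exact f.toHom.map_adj hc
    · rw [Finset.card_image_of_injective _ hbij.injective, SimpleGraph.card_neighborFinset_eq_degree,
        SimpleGraph.card_neighborFinset_eq_degree, hdeg, hcdeg]
  have hb : f b ∈ G.neighborFinset (f a) := (G.mem_neighborFinset _ _).2 h
  rw [← hsub, Finset.mem_image] at hb
  obtain ⟨c, hc, hcb⟩ := hb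
  rw [← f.injective hcb]
  exact (SimpleGraph.mem_neighborFinset _ _ _).1 hc

lemma pow_eq_one_of_mulVec_eq_smul {n : Type*} [Fintype n] [DecidableEq n] {M : Matrix n n ℂ}
    {k : ℕ} (hM : M ^ k = 1) {z : ℂ} {w : n → ℂ} (hw : w ≠ 0) (h : M *ᵥ w = z • w) :
    z ^ k = 1 := by
  have hpow : ∀ j : ℕ, (M ^ j) *ᵥ w = z ^ j • w := by
    intro j
    induction j with
    | zero => simp
    | succ j ih => rw [pow_succ, ← mulVec_mulVec, h, mulVec_smul, ih, smul_smul, pow_succ']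
  have h1 := hpow k
  rw [hM, one_mulVec] at h1
  obtain ⟨i, hi⟩ := Function.ne_iff.1 hw
  have h2 := congrFun h1 i
  exact mul_right_cancel₀ hi (by simpa using h2.symm)

lemma pow_eq_one_of_groverU_pow_eq_one (hpos : ∀ v, 0 < G.degree v) {k : ℕ}
    (h : groverU G ^ k = 1) {g : V → ℂ} (hg0 : g ≠ 0) {z : ℂ} (hz : z ≠ 0)
    (hg : ∀ u, 2 * ∑ w ∈ G.neighborFinset u, g w = (z + z⁻¹) * G.degree u * g u) :
    z ^ k = 1 := by
  have hsnd := groverU_mulVec_snd G g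
  have hfst := groverU_mulVec_fst G hg
  by_cases hw : (fun e : Arc G => g e.1.1 - z⁻¹ * g e.1.2) = 0
  · have h1 : (fun e : Arc G => g e.1.1) = z⁻¹ • fun e : Arc G => g e.1.2 := by
      ext e
      simpa [sub_eq_zero] using congrFun hw e
    have h2 : (fun e : Arc G => g e.1.2) ≠ 0 := by
      obtain ⟨v, hv⟩ := Function.ne_iff.1 hg0
      obtain ⟨w, hvw⟩ := (G.degree_pos_iff_exists_adj v).1 (hpos v)
      let a : Arc G := ⟨(w, v), hvw.symm⟩
      exact fun h3 => hv (congrFun h3 a)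
    have h3 := pow_eq_one_of_mulVec_eq_smul h h2 (hsnd.trans h1)
    simpa using h3
  · refine pow_eq_one_of_mulVec_eq_smul h hw ?_
    have h4 : (fun e : Arc G => g e.1.1 - z⁻¹ * g e.1.2) =
        (fun e : Arc G => g e.1.1) - z⁻¹ • fun e : Arc G => g e.1.2 := rfl
    rw [h4, mulVec_sub, mulVec_smul, hfst, hsnd]
    ext e
    simp only [Pi.sub_apply, Pi.smul_apply, smul_eq_mul]
    field_simp
    ring

lemma isIntegral_two_add_add_inv {k : ℕ} (hk : Odd k) {z : ℂ} (hzk : z ^ k = 1) (hz : z ≠ 1) :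
    2 + (z + z⁻¹) ≠ 0 ∧ IsIntegral ℤ (2 + (z + z⁻¹)) ∧ IsIntegral ℤ (2 + (z + z⁻¹))⁻¹ := by
  obtain ⟨j, rfl⟩ := hk
  have hz0 : z ≠ 0 := by
    rintro rfl
    simp at hzk
  have hzint : IsIntegral ℤ z := IsIntegral.of_pow (n := 2 * j + 1) (by omega) (hzk ▸ isIntegral_one)
  have hinv : IsIntegral ℤ z⁻¹ := by
    refine IsIntegral.of_pow (n := 2 * j + 1) (by omega) ?_
    rw [inv_pow, hzk, inv_one]
    exact isIntegral_one
  have h2 : IsIntegral ℤ (2 : ℂ) := by exact_mod_cast isIntegral_algebraMap (R := ℤ) (A := ℂ) (x := 2)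
  have hsum : (1 + z) * ∑ i ∈ range (j + 1), (z ^ 2) ^ i = 1 := by
    have hz2 : (z ^ 2) ^ (j + 1) = z := by
      calc (z ^ 2) ^ (j + 1) = z ^ (2 * j + 1) * z := by ring
        _ = z := by rw [hzk, one_mul]
    have h3 := mul_neg_geom_sum (z ^ 2) (j + 1)
    rw [hz2] at h3
    refine mul_left_cancel₀ (sub_ne_zero.2 hz.symm) ?_
    linear_combination h3
  have heq : (2 + (z + z⁻¹)) * (z * (∑ i ∈ range (j + 1), (z ^ 2) ^ i) ^ 2) = 1 := by
    have h4 : 2 + (z + z⁻¹) = (1 + z) ^ 2 * z⁻¹ := by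
      field_simp
      ring
    rw [h4]
    calc _ = ((1 + z) * ∑ i ∈ range (j + 1), (z ^ 2) ^ i) ^ 2 * (z⁻¹ * z) := by ring
      _ = 1 := by rw [hsum, inv_mul_cancel₀ hz0]; norm_num
  refine ⟨left_ne_zero_of_mul_eq_one heq, h2.add (hzint.add hinv), ?_⟩
  rw [inv_eq_of_mul_eq_one_right heq]
  exact hzint.mul ((IsIntegral.sum _ fun i _ => (hzint.pow 2).pow i).pow 2)

lemma eq_one_of_isIntegral_inv {q : ℚ} (hq : 0 ≤ q) (h0 : q ≠ 0) (h1 : IsIntegral ℤ (q : ℂ))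
    (h2 : IsIntegral ℤ (q : ℂ)⁻¹) : q = 1 := by
  have h3 : IsIntegral ℤ q :=
    (isIntegral_algebraMap_iff (A := ℚ) (B := ℂ) (algebraMap ℚ ℂ).injective).1 h1
  have h4 : IsIntegral ℤ q⁻¹ := by
    refine (isIntegral_algebraMap_iff (A := ℚ) (B := ℂ) (algebraMap ℚ ℂ).injective).1 ?_
    simpa using h2
  obtain ⟨a, rfl⟩ := IsIntegrallyClosed.isIntegral_iff.1 h3
  obtain ⟨b, hb⟩ := IsIntegrallyClosed.isIntegral_iff.1 h4
  have hab : a * b = 1 := by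
    have : (a : ℚ) * b = 1 := by
      simp only [eq_intCast] at hb h0
      rw [hb, mul_inv_cancel₀ h0]
    exact_mod_cast this
  have ha : 0 ≤ a := by simpa using hq
  rcases Int.eq_one_or_neg_one_of_mul_eq_one hab with rfl | rfl
  · simp
  · omega

/-- The symmetric normalization of the adjacency matrix, similar to the transition matrix. -/
noncomputable def normalizedAdj : Matrix V V ℝ := fun u v =>
  if G.Adj u v then (√(G.degree u : ℝ))⁻¹ * (√(G.degree v : ℝ))⁻¹ else 0

lemma isHermitian_normalizedAdj : (normalizedAdj G).IsHermitian := by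
  ext u v
  simp only [conjTranspose_apply, normalizedAdj, star_trivial, G.adj_comm v u]
  rw [mul_comm]

lemma normalizedAdj_eigenvector (hpos : ∀ v, 0 < G.degree v) {x : V → ℝ} {l : ℝ}
    (h : normalizedAdj G *ᵥ x = l • x) (u : V) :
    ∑ w ∈ G.neighborFinset u, x w / √(G.degree w : ℝ) =
      l * G.degree u * (x u / √(G.degree u : ℝ)) := by
  have hd : √(G.degree u : ℝ) ≠ 0 := (Real.sqrt_pos.2 (by exact_mod_cast hpos u)).ne'
  have h1 := congrFun h u
  simp only [mulVec, dotProduct, normalizedAdj, ite_mul, zero_mul, Pi.smul_apply,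
    smul_eq_mul] at h1
  rw [← Finset.sum_filter] at h1
  have h2 : (univ.filter fun w => G.Adj u w) = G.neighborFinset u := by
    ext w
    simp
  rw [h2] at h1
  have h3 : l * G.degree u * (x u / √(G.degree u : ℝ)) = √(G.degree u : ℝ) * (l * x u) := by
    have := Real.mul_self_sqrt (Nat.cast_nonneg (α := ℝ) (G.degree u))
    field_simp
    rw [sq, this]
    ring
  rw [h3, ← h1, Finset.mul_sum]
  refine Finset.sum_congr rfl fun w _ => ?_
  field_simp

lemma normalizedAdj_eigenvector_one (hconn : G.Connected) (hpos : ∀ v, 0 < G.degree v) {x : V → ℝ}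
    (h : normalizedAdj G *ᵥ x = x) (u v : V) :
    x u / √(G.degree u : ℝ) = x v / √(G.degree v : ℝ) := by
  have h1 := normalizedAdj_eigenvector G hpos (l := 1) (x := x) (by rw [h, one_smul])
  refine (G.lapMatrix_mulVec_eq_zero_iff_forall_reachable
    (x := fun w => x w / √(G.degree w : ℝ))).1 ?_ u v (hconn.preconnected u v)
  ext w
  rw [SimpleGraph.lapMatrix_mulVec_apply, h1]
  simp

lemma eigenvalues_normalizedAdj_one_unique (hconn : G.Connected) (hpos : ∀ v, 0 < G.degree v)
    {i j : V} (hi : (isHermitian_normalizedAdj G).eigenvalues i = 1)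
    (hj : (isHermitian_normalizedAdj G).eigenvalues j = 1) : i = j := by
  by_contra hij
  set hN := isHermitian_normalizedAdj G
  have hconst : ∀ i, hN.eigenvalues i = 1 → ∃ c : ℝ, c ≠ 0 ∧
      ∀ u, hN.eigenvectorBasis i u = c * √(G.degree u : ℝ) := by
    intro i hi
    have h1 := hN.mulVec_eigenvectorBasis i
    rw [hi, one_smul] at h1
    have h2 := normalizedAdj_eigenvector_one G hconn hpos h1
    have h3 : ∀ u, hN.eigenvectorBasis i u =
        hN.eigenvectorBasis i i / √(G.degree i : ℝ) * √(G.degree u : ℝ) := by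
      intro u
      have hd : √(G.degree u : ℝ) ≠ 0 := (Real.sqrt_pos.2 (by exact_mod_cast hpos u)).ne'
      rw [h2 i u, div_mul_cancel₀ _ hd]
    refine ⟨_, fun hc => ?_, h3⟩
    apply hN.eigenvectorBasis.toBasis.ne_zero i
    ext u
    simpa [hc] using h3 u
  obtain ⟨c, hc, hci⟩ := hconst i hi
  obtain ⟨c', hc', hcj⟩ := hconst j hj
  have hinner := hN.eigenvectorBasis.inner_eq_zero hij
  have hsum : inner ℝ (hN.eigenvectorBasis i) (hN.eigenvectorBasis j) =
      c * c' * ∑ u, (G.degree u : ℝ) := by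
    rw [PiLp.inner_apply, Finset.mul_sum]
    refine Finset.sum_congr rfl fun u _ => ?_
    have := Real.mul_self_sqrt (Nat.cast_nonneg (α := ℝ) (G.degree u))
    simp only [hci, hcj, RCLike.inner_apply, conj_trivial]
    linear_combination c * c' * this
  rw [hsum] at hinner
  have : 0 < ∑ u, (G.degree u : ℝ) :=
    Finset.sum_pos (fun u _ => by exact_mod_cast hpos u) ⟨i, mem_univ i⟩
  exact mul_ne_zero (mul_ne_zero hc hc') this.ne' hinner

lemma isIntegral_eigenvalues_normalizedAdj (hpos : ∀ v, 0 < G.degree v) {k : ℕ} (hk : Odd k)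
    (h : groverU G ^ k = 1) {i : V} (hi : (isHermitian_normalizedAdj G).eigenvalues i ≠ 1) :
    ((2 + 2 * (isHermitian_normalizedAdj G).eigenvalues i : ℝ) : ℂ) ≠ 0 ∧
      IsIntegral ℤ ((2 + 2 * (isHermitian_normalizedAdj G).eigenvalues i : ℝ) : ℂ) ∧
      IsIntegral ℤ ((2 + 2 * (isHermitian_normalizedAdj G).eigenvalues i : ℝ) : ℂ)⁻¹ := by
  set hN := isHermitian_normalizedAdj G
  set l := hN.eigenvalues i
  obtain ⟨z, hz⟩ : ∃ z : ℂ, z * z - 2 * l * z + 1 = 0 := by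
    obtain ⟨s, hs⟩ := IsAlgClosed.exists_eq_mul_self ((l : ℂ) ^ 2 - 1)
    exact ⟨l + s, by linear_combination -hs⟩
  have hz0 : z ≠ 0 := by
    rintro rfl
    simp at hz
  have hzl : z + z⁻¹ = 2 * l := by
    field_simp
    linear_combination hz
  have hz1 : z ≠ 1 := by
    rintro rfl
    apply hi
    have : (l : ℂ) = 1 := by linear_combination -(1 / 2) * hz
    exact_mod_cast this
  have h1 := normalizedAdj_eigenvector G hpos (hN.mulVec_eigenvectorBasis i)
  let g : V → ℂ := fun u => ((hN.eigenvectorBasis i u / √(G.degree u : ℝ) : ℝ) : ℂ)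
  have hg0 : g ≠ 0 := by
    intro hg
    apply hN.eigenvectorBasis.toBasis.ne_zero i
    ext u
    have hd : √(G.degree u : ℝ) ≠ 0 := (Real.sqrt_pos.2 (by exact_mod_cast hpos u)).ne'
    have h2 : hN.eigenvectorBasis i u / √(G.degree u : ℝ) = 0 :=
      Complex.ofReal_eq_zero.1 (congrFun hg u)
    simpa using (div_eq_zero_iff.1 h2).resolve_right hd
  have hzk : z ^ k = 1 := by
    refine pow_eq_one_of_groverU_pow_eq_one G hpos h hg0 hz0 fun u => ?_
    rw [hzl]
    have h3 : ∑ w ∈ G.neighborFinset u, g w = l * G.degree u * g u := by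
      have := h1 u
      simp only [g]
      exact_mod_cast this
    rw [h3]
    ring
  have := isIntegral_two_add_add_inv hk hzk hz1
  rw [hzl] at this
  push_cast
  exact this

lemma exists_mul_transpose_eq_degMatrix_add_adjMatrix
    (hsum : ∑ v, G.degree v = 2 * Fintype.card V) :
    ∃ B : Matrix V V ℤ, B * Bᵀ = diagonal (fun v => (G.degree v : ℤ)) + G.adjMatrix ℤ ∧
      ∀ v, ∑ u, B u v = 2 := by
  have hcard : Fintype.card V = Fintype.card G.edgeSet := by
    rw [← SimpleGraph.edgeFinset_card]
    have := G.sum_degrees_eq_twice_card_edges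
    omega
  let ε := Fintype.equivOfCardEq hcard
  refine ⟨(G.incMatrix ℤ).submatrix id fun v => (ε v : Sym2 V), ?_, fun v => ?_⟩
  · have h : (diagonal (fun v => (G.degree v : ℤ)) + G.adjMatrix ℤ : Matrix V V ℤ) =
        G.incMatrix ℤ * (G.incMatrix ℤ)ᵀ := by
      rw [SimpleGraph.incMatrix_mul_transpose]
      ext u v
      by_cases huv : u = v
      · subst huv
        simp
      · simp [huv, SimpleGraph.adjMatrix_apply]
    rw [h]
    ext u v
    simp only [Matrix.mul_apply, submatrix_apply, transpose_apply, id]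
    rw [Equiv.sum_comp ε fun e : G.edgeSet => G.incMatrix ℤ u e * G.incMatrix ℤ v e]
    refine (Finset.sum_subtype G.edgeFinset (fun e => SimpleGraph.mem_edgeFinset)
      fun e => G.incMatrix ℤ u e * G.incMatrix ℤ v e).symm.trans
      (Finset.sum_subset (Finset.subset_univ _) fun e _ he => ?_)
    have hu : e ∉ G.incidenceSet u := fun h => he (SimpleGraph.mem_edgeFinset.2 h.1)
    rw [SimpleGraph.incMatrix_of_notMem_incidenceSet G hu, zero_mul]
  · simp only [submatrix_apply, id]
    exact SimpleGraph.sum_incMatrix_apply_of_mem_edgeSet G (ε v).2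

lemma even_det_of_sum_col_eq_two {n : Type*} [Fintype n] [DecidableEq n] [Nonempty n]
    {B : Matrix n n ℤ} (h : ∀ v, ∑ u, B u v = 2) : Even B.det := by
  have h1 : (fun _ => 1 : n → ℤ) ᵥ* B = fun _ => 2 := by
    ext v
    simp [vecMul, dotProduct, h]
  have h2 := congrArg (· ᵥ* B.adjugate) h1
  simp only [vecMul_vecMul, mul_adjugate, vecMul_smul, vecMul_one] at h2
  obtain ⟨v⟩ := ‹Nonempty n›
  have h3 := congrFun h2 v
  simp only [Pi.smul_apply, smul_eq_mul, mul_one, vecMul, dotProduct, ← Finset.mul_sum] at h3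
  exact h3 ▸ even_two_mul _

lemma prod_degree_mul_prod_eigenvalues (hpos : ∀ v, 0 < G.degree v) :
    (∏ v, (G.degree v : ℝ)) * ∏ i, (1 + (isHermitian_normalizedAdj G).eigenvalues i) =
      ((diagonal (fun v => (G.degree v : ℤ)) + G.adjMatrix ℤ).det : ℝ) := by
  have hs : ∀ v, √(G.degree v : ℝ) ≠ 0 := fun v =>
    (Real.sqrt_pos.2 (by exact_mod_cast hpos v)).ne'
  have hdet : (1 + normalizedAdj G).det =
      ∏ i, (1 + (isHermitian_normalizedAdj G).eigenvalues i) := by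
    have h1 := congrArg (Polynomial.eval (-1)) (isHermitian_normalizedAdj G).charpoly_eq
    rw [Matrix.eval_charpoly, Polynomial.eval_prod] at h1
    have h2 : scalar V (-1 : ℝ) - normalizedAdj G = -(1 + normalizedAdj G) := by
      rw [map_neg, map_one]
      abel
    rw [h2, det_neg] at h1
    simp only [Polynomial.eval_sub, Polynomial.eval_X, Polynomial.eval_C, RCLike.ofReal_real_eq_id,
      id] at h1
    have h3 : ∀ i, -1 - (isHermitian_normalizedAdj G).eigenvalues i =
      -1 * (1 + (isHermitian_normalizedAdj G).eigenvalues i) := fun i => by ring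
    simp only [h3, Finset.prod_mul_distrib, Finset.prod_const, Finset.card_univ] at h1
    exact mul_left_cancel₀ (pow_ne_zero _ (by norm_num)) h1
  have hconj : (diagonal (fun v => (G.degree v : ℤ)) + G.adjMatrix ℤ).map (Int.castRingHom ℝ) =
      diagonal (fun v => √(G.degree v : ℝ)) * (1 + normalizedAdj G) *
        diagonal (fun v => √(G.degree v : ℝ)) := by
    ext u v
    rw [mul_diagonal, diagonal_mul]
    have hu := Real.mul_self_sqrt (Nat.cast_nonneg (α := ℝ) (G.degree u))
    have hu0 := hs u
    have hv0 := hs v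
    by_cases huv : u = v
    · subst huv
      simp [normalizedAdj, hu]
    · by_cases hadj : G.Adj u v
      · simp [normalizedAdj, huv, hadj, SimpleGraph.adjMatrix_apply]
        field_simp
      · simp [normalizedAdj, huv, hadj, SimpleGraph.adjMatrix_apply]
  have hcast := RingHom.map_det (Int.castRingHom ℝ)
    (diagonal (fun v => (G.degree v : ℤ)) + G.adjMatrix ℤ)
  rw [RingHom.mapMatrix_apply, hconj, det_mul, det_mul, det_diagonal, hdet] at hcast
  rw [← eq_intCast (Int.castRingHom ℝ), hcast, mul_right_comm,
    ← Finset.prod_mul_distrib (f := fun v => √(G.degree v : ℝ))]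
  congr 1
  exact Finset.prod_congr rfl fun v _ =>
    (Real.mul_self_sqrt (Nat.cast_nonneg (α := ℝ) (G.degree v))).symm

lemma two_pow_card_le_prod_degree (hconn : G.Connected) (hpos : ∀ v, 0 < G.degree v) {k : ℕ}
    (hk : Odd k) (h : groverU G ^ k = 1) : 2 ^ Fintype.card V ≤ ∏ v, G.degree v := by
  set hN := isHermitian_normalizedAdj G
  obtain ⟨B, hB, hcol⟩ := exists_mul_transpose_eq_degMatrix_add_adjMatrix G
    (sum_degrees_eq_of_groverU_pow_eq_one G hpos hk h)
  have := hconn.nonempty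
  have hc := even_det_of_sum_col_eq_two hcol
  have hdet := prod_degree_mul_prod_eigenvalues G hpos
  rw [← hB, det_mul, det_transpose] at hdet
  generalize B.det = b at hc hdet
  obtain ⟨c, hc⟩ := hc
  set P := ∏ v, G.degree v with hP
  have hP0 : P ≠ 0 := Finset.prod_ne_zero_iff.2 fun v _ => (hpos v).ne'
  set s := univ.filter fun i => hN.eigenvalues i = 1
  have hs : #s ≤ 1 := Finset.card_le_one.2 fun i hi j hj =>
    eigenvalues_normalizedAdj_one_unique G hconn hpos (mem_filter.1 hi).2 (mem_filter.1 hj).2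
  set R : ℂ := ∏ i ∈ univ.filter (fun i => ¬ hN.eigenvalues i = 1),
    ((2 + 2 * hN.eigenvalues i : ℝ) : ℂ) with hR
  have hzint : ∀ i ∈ univ.filter (fun i => ¬ hN.eigenvalues i = 1), _ := fun i hi =>
    isIntegral_eigenvalues_normalizedAdj G hpos hk h (mem_filter.1 hi).2
  have hR0 : R ≠ 0 := Finset.prod_ne_zero_iff.2 fun i hi => (hzint i hi).1
  have hR1 : IsIntegral ℤ R := IsIntegral.prod _ fun i hi => (hzint i hi).2.1
  have hR2 : IsIntegral ℤ R⁻¹ := by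
    rw [hR, ← Finset.prod_inv_distrib]
    exact IsIntegral.prod _ fun i hi => (hzint i hi).2.2
  have hprod : (P : ℂ) * (4 ^ #s * R) = 2 ^ Fintype.card V * (b : ℂ) ^ 2 := by
    have h1 : (4 ^ #s * R) = ∏ i, ((2 + 2 * hN.eigenvalues i : ℝ) : ℂ) := by
      rw [← Finset.prod_filter_mul_prod_filter_not univ fun i => hN.eigenvalues i = 1]
      congr 1
      rw [← Finset.prod_const]
      refine Finset.prod_congr rfl fun i hi => ?_
      rw [(mem_filter.1 hi).2]
      norm_num
    have h2 : ∏ i, ((2 + 2 * hN.eigenvalues i : ℝ) : ℂ) =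
        2 ^ Fintype.card V * ((∏ i, (1 + hN.eigenvalues i) : ℝ) : ℂ) := by
      rw [Complex.ofReal_prod, ← Finset.card_univ, ← Finset.prod_const, ← Finset.prod_mul_distrib]
      refine Finset.prod_congr rfl fun i _ => ?_
      push_cast
      ring
    have h3 : (P : ℂ) * ((∏ i, (1 + hN.eigenvalues i) : ℝ) : ℂ) = (b : ℂ) ^ 2 := by
      have h4 := congrArg (fun x : ℝ => (x : ℂ)) hdet
      simp only [Complex.ofReal_mul] at h4
      rw [hP, sq]
      exact_mod_cast h4
    rw [h1, h2]
    linear_combination 2 ^ Fintype.card V * h3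
  have hPc : (P : ℂ) ≠ 0 := by exact_mod_cast hP0
  have hRq : R = ((2 ^ Fintype.card V * (b : ℚ) ^ 2 / (P * 4 ^ #s) : ℚ) : ℂ) := by
    push_cast
    rw [← hprod]
    field_simp
  rw [hRq] at hR0 hR1 hR2
  have hR3 := eq_one_of_isIntegral_inv (by positivity) (by exact_mod_cast hR0) hR1 hR2
  have hPq : (P : ℚ) ≠ 0 := by exact_mod_cast hP0
  rw [div_eq_one_iff_eq (mul_ne_zero hPq (by positivity))] at hR3
  have hfin : 2 ^ Fintype.card V * b ^ 2 = (P : ℤ) * 4 ^ #s := by exact_mod_cast hR3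
  have hc0 : c ≠ 0 := by
    rintro rfl
    rw [hc] at hfin
    have : (P : ℤ) * 4 ^ #s ≠ 0 := by positivity
    simp at hfin
    omega
  have hc1 : 1 ≤ c ^ 2 := by
    have := sq_pos_of_ne_zero hc0
    omega
  have h4 : (4 : ℤ) ^ #s ≤ 4 := by
    simpa using pow_le_pow_right₀ (by norm_num : (1 : ℤ) ≤ 4) hs
  have h5 : (2 : ℤ) ^ Fintype.card V * 4 ≤ P * 4 := by
    calc (2 : ℤ) ^ Fintype.card V * 4 ≤ 2 ^ Fintype.card V * (c + c) ^ 2 := by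
          gcongr
          linarith
      _ = P * 4 ^ #s := by rw [← hc, hfin]
      _ ≤ P * 4 := by gcongr
  have h6 : (2 : ℤ) ^ Fintype.card V ≤ P := by linarith
  exact_mod_cast h6

lemma eq_two_of_sum_eq_of_le_prod {ι : Type*} [Fintype ι] {d : ι → ℕ} (hpos : ∀ i, 0 < d i)
    (hsum : ∑ i, d i = 2 * Fintype.card ι) (hprod : 2 ^ Fintype.card ι ≤ ∏ i, d i) (i : ι) :
    d i = 2 := by
  have hpos' : ∀ i, 0 < (d i : ℝ) / 2 := fun i => by
    have := hpos i
    positivity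
  have hlog : 0 ≤ ∑ i, Real.log (d i / 2) := by
    rw [← Real.log_prod fun i _ => (hpos' i).ne']
    apply Real.log_nonneg
    rw [Finset.prod_div_distrib, Finset.prod_const, Finset.card_univ, one_le_div (by positivity)]
    exact_mod_cast hprod
  have hlin : ∑ i, ((d i : ℝ) / 2 - 1) = 0 := by
    have : ∑ i, (d i : ℝ) = 2 * Fintype.card ι := by exact_mod_cast hsum
    rw [Finset.sum_sub_distrib, ← Finset.sum_div, this]
    simp
  by_contra hi
  refine hlog.not_gt (hlin ▸ Finset.sum_lt_sum
    (fun j _ => Real.log_le_sub_one_of_pos (hpos' j)) ⟨i, mem_univ i, ?_⟩)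
  refine Real.log_lt_sub_one_of_pos (hpos' i) fun h => hi ?_
  have : (d i : ℝ) = 2 := by linarith
  exact_mod_cast this

end

/-- For an odd integer `k ≥ 3`, a finite simple connected graph `G` is
`k`-periodic if and only if `G` is isomorphic to the cycle graph `C_k`. -/
theorem odd_kPeriodic_iff_isCycle {V : Type*} [Fintype V] (G : SimpleGraph V)
    (hconn : G.Connected) (k : ℕ) (hk3 : 3 ≤ k) (hkodd : Odd k) :
    IsKPeriodic G k ↔ Nonempty (G ≃g SimpleGraph.cycleGraph k) := by
  refine ⟨?_, fun ⟨ψ⟩ => isKPeriodic_of_iso_cycleGraph G hk3 ψ⟩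
  rintro ⟨hper, hk⟩
  have hpow : groverU G ^ k = 1 := hk ▸ (Nat.sInf_mem hper).2
  have hnt : Nontrivial V := by
    by_contra hV
    rw [not_nontrivial_iff_subsingleton] at hV
    have : IsEmpty (Arc G) := ⟨fun e => e.2.ne (Subsingleton.elim _ _)⟩
    have h1 : period G ≤ 1 := Nat.sInf_le ⟨one_pos, Subsingleton.elim _ _⟩
    omega
  have hpos : ∀ v, 0 < G.degree v := fun v => hconn.preconnected.degree_pos_of_nontrivial v
  obtain ⟨h3, ⟨ψ⟩⟩ := iso_cycleGraph_of_degree_eq_two G hconn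
    (eq_two_of_sum_eq_of_le_prod hpos (sum_degrees_eq_of_groverU_pow_eq_one G hpos hkodd hpow)
      (two_pow_card_le_prod_degree G hconn hpos hkodd hpow))
  have hcard : Fintype.card V = k := (isKPeriodic_of_iso_cycleGraph G h3 ψ).2.symm.trans hk
  exact ⟨hcard ▸ ψ⟩

end GroverPaper
end

section
/- Let k ≥ 3 be odd and let G ∈ 𝒪(k) have unique cycle vertices u_0, u_1, …, u_{k−1}. If G is periodic, then either (i) deg(u_0)=deg(u_1)=…=deg(u_{k−1})=2, or (ii) there exists a unique index 0 ≤ i ≤ k−1 with deg(u_i)=4 and deg(u_l)=2 for all l ≠ i. -/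
open Matrix

attribute [local instance] Classical.propDecidable

namespace GroverPaper

variable {V : Type*}

theorem groverU_mulVec [Fintype V] (G : SimpleGraph V) (h : V → V → ℂ) (e : Arc G) :
    (groverU G *ᵥ fun f => h f.1.1 f.1.2) e =
      2 / (G.degree e.1.1 : ℂ) * ∑ w ∈ G.neighborFinset e.1.1, h w e.1.1 - h e.1.2 e.1.1 := by
  have key (f : Arc G) : groverU G e f * h f.1.1 f.1.2 = if f.1.2 = e.1.1 then
      (2 / (G.degree e.1.1 : ℂ) * h f.1.1 e.1.1 - if f.1.1 = e.1.2 then h f.1.1 e.1.1 else 0)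
      else 0 := by
    obtain ⟨⟨a, b⟩, hf⟩ := f
    obtain ⟨⟨u, v⟩, he⟩ := e
    simp only [groverU, Prod.mk.injEq]
    by_cases h1 : b = u
    · subst h1
      by_cases h2 : a = v
      · subst h2; simp; ring
      · simp [h2, Ne.symm h2]
    · simp [h1]
  obtain ⟨⟨u, v⟩, he⟩ := e
  simp only [mulVec, dotProduct]
  rw [Finset.sum_congr rfl fun f _ => key f, ← Finset.sum_filter, Finset.mul_sum]
  have hv : h v u = ∑ w ∈ G.neighborFinset u, if w = v then h w u else 0 := by
    rw [Finset.sum_ite_eq']; simp [show G.Adj u v from he]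
  rw [hv, ← Finset.sum_sub_distrib]
  refine Finset.sum_bij (fun f _ => f.1.1) ?_ ?_ ?_ ?_
  · rintro ⟨⟨a, b⟩, hf⟩ hb
    obtain rfl : b = u := by simpa using hb
    simpa using hf.symm
  · rintro ⟨⟨a, b⟩, hf⟩ hb ⟨⟨a', b'⟩, hf'⟩ hb' haa
    obtain rfl : b = u := by simpa using hb
    obtain rfl : b' = b := by simpa using hb'
    obtain rfl : a = a' := haa
    rfl
  · intro w hw
    exact ⟨⟨(w, u), by simpa using (G.mem_neighborFinset u w |>.1 hw).symm⟩, by simp, rfl⟩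
  · rintro ⟨⟨a, b⟩, hf⟩ hb
    rfl

/-- Twice the transition matrix of the isotropic random walk, over the complex numbers. -/
noncomputable def twiceTransition [Fintype V] (G : SimpleGraph V) : Matrix V V ℂ := fun u v =>
  if G.Adj u v then 2 / (G.degree u : ℂ) else 0

theorem twiceTransition_mulVec [Fintype V] (G : SimpleGraph V) (x : V → ℂ) (u : V) :
    (twiceTransition G *ᵥ x) u = 2 / (G.degree u : ℂ) * ∑ w ∈ G.neighborFinset u, x w := by
  simp only [mulVec, dotProduct, twiceTransition, ite_mul, zero_mul]
  rw [← Finset.sum_filter, Finset.mul_sum]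
  refine Finset.sum_congr ?_ fun _ _ => rfl
  ext; simp

theorem isIntegral_of_groverU_mulVec [Fintype V] {G : SimpleGraph V} (hper : IsPeriodic G)
    {μ : ℂ} {y : Arc G → ℂ} (hy : y ≠ 0) (h : groverU G *ᵥ y = μ • y) :
    IsIntegral ℤ μ ∧ IsIntegral ℤ μ⁻¹ := by
  obtain ⟨n, hn, hU⟩ := hper
  have hpow (m : ℕ) : groverU G ^ m *ᵥ y = μ ^ m • y := by
    induction m with
    | zero => simp
    | succ m ih => rw [pow_succ, ← mulVec_mulVec, h, mulVec_smul, ih, smul_smul, pow_succ']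
  have h1 : μ ^ n = 1 := by
    have := hpow n
    rw [hU, one_mulVec] at this
    exact (smul_left_injective ℂ hy (by simpa using this)).symm
  exact ⟨.of_pow hn (h1 ▸ isIntegral_one),
    .of_pow hn (by rw [inv_pow, h1, inv_one]; exact isIntegral_one)⟩

theorem isIntegral_of_twiceTransition_mulVec [Fintype V] {G : SimpleGraph V}
    (hdeg : ∀ v, 0 < G.degree v) (hper : IsPeriodic G)
    {z : ℂ} {x : V → ℂ} (hx : x ≠ 0) (h : twiceTransition G *ᵥ x = z • x) :
    IsIntegral ℤ z := by
  set φ : Arc G → ℂ := fun e => x e.1.1 with hφ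
  set ψ : Arc G → ℂ := fun e => x e.1.2 with hψ
  have hUφ : groverU G *ᵥ φ = z • φ - ψ := by
    ext e
    have h' := congrFun h e.1.1
    rw [twiceTransition_mulVec] at h'
    rw [groverU_mulVec G (fun u _ => x u), h']
    rfl
  have hUψ : groverU G *ᵥ ψ = φ := by
    ext e
    rw [groverU_mulVec G (fun _ u => x u)]
    have : (G.degree e.1.1 : ℂ) ≠ 0 := by exact_mod_cast (hdeg _).ne'
    simp only [Finset.sum_const, SimpleGraph.card_neighborFinset_eq_degree, nsmul_eq_mul, hφ]
    field_simp
    ring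
  have hφ0 : φ ≠ 0 := by
    obtain ⟨v, hv⟩ := Function.ne_iff.1 hx
    obtain ⟨w, hw⟩ := (G.degree_pos_iff_exists_adj v).1 (hdeg v)
    exact fun h0 => hv (congrFun h0 ⟨(v, w), hw⟩)
  obtain ⟨μ, hμ⟩ := exists_quadratic_eq_zero (one_ne_zero (α := ℂ)) (b := -z) (c := 1)
    (IsAlgClosed.exists_eq_mul_self _)
  have hμ0 : μ ≠ 0 := by rintro rfl; simp at hμ
  have hz : z = μ + μ⁻¹ := by field_simp; linear_combination -hμ
  suffices h : IsIntegral ℤ μ ∧ IsIntegral ℤ μ⁻¹ from hz ▸ h.1.add h.2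
  by_cases h0 : φ - μ • ψ = 0
  · have h1 : φ = μ • ψ := sub_eq_zero.1 h0
    refine isIntegral_of_groverU_mulVec hper (y := ψ) ?_ (by rw [hUψ, h1])
    rintro h2
    exact hφ0 (by rw [h1, h2, smul_zero])
  · have := isIntegral_of_groverU_mulVec hper (μ := μ⁻¹) h0 (by
      rw [mulVec_sub, mulVec_smul, hUφ, hUψ, smul_sub, smul_smul, inv_mul_cancel₀ hμ0, hz]
      module)
    simpa using this.symm

theorem isIntegral_charpoly_twiceTransition_coeff [Fintype V] [DecidableEq V] {G : SimpleGraph V}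
    (hdeg : ∀ v, 0 < G.degree v) (hper : IsPeriodic G) (j : ℕ) :
    IsIntegral ℤ ((twiceTransition G).charpoly.coeff j) := by
  refine Polynomial.isIntegral_coeff_of_factors _ ?_ (IsAlgClosed.splits _) ?_ j
  · rw [(charpoly_monic _).leadingCoeff]; exact isIntegral_one
  · intro z hz
    rw [Polynomial.IsRoot, eval_charpoly] at hz
    obtain ⟨x, hx, h⟩ := exists_mulVec_eq_zero_iff.2 hz
    refine isIntegral_of_twiceTransition_mulVec hdeg hper hx ?_
    rw [sub_mulVec, sub_eq_zero] at h
    rw [← h]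
    simp [scalar_apply]

theorem charpoly_coeff_of_diag_eq_zero {n R : Type*} [Fintype n] [DecidableEq n] [CommRing R]
    (M : Matrix n n R) (hM : ∀ i, M i i = 0) {k : ℕ} (hk : k ≤ Fintype.card n) :
    M.charpoly.coeff (Fintype.card n - k) = ∑ σ : Equiv.Perm n with σ.support.card = k,
      ((Equiv.Perm.sign σ : ℤ) : R) * ∏ i ∈ σ.support, -M (σ i) i := by
  rw [charpoly, det_apply', Polynomial.finsetSum_coeff, Finset.sum_filter]
  refine Finset.sum_congr rfl fun σ _ => ?_
  have hprod : ∏ i, charmatrix M (σ i) i = Polynomial.C (∏ i ∈ σ.support, -M (σ i) i) *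
      Polynomial.X ^ (Fintype.card n - σ.support.card) := by
    rw [← Finset.prod_mul_prod_compl σ.support, map_prod, ← Finset.card_compl]
    congr 1
    · refine Finset.prod_congr rfl fun i hi => ?_
      rw [charmatrix_apply_ne _ _ _ (Equiv.Perm.mem_support.1 hi), map_neg]
    · refine Finset.prod_eq_pow_card fun i hi => ?_
      have : σ i = i := by simpa using hi
      rw [this, charmatrix_apply_eq, hM, map_zero, sub_zero]
  have hs : σ.support.card ≤ Fintype.card n := Finset.card_le_univ _
  rw [hprod, ← Polynomial.C_eq_intCast, ← mul_assoc, ← map_mul, Polynomial.coeff_C_mul_X_pow]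
  refine if_congr (by omega) rfl rfl

theorem natCast_zmod_ne_zero {k n : ℕ} (hn : 0 < n) (hnk : n < k) : (n : ZMod k) ≠ 0 := by
  rw [Ne, ZMod.natCast_eq_zero_iff]
  exact Nat.not_dvd_of_pos_of_lt hn hnk

theorem exists_eq_of_isBipartite_deleteEdges {G : SimpleGraph V} [Fintype V] [DecidableEq V]
    {e : Sym2 V} (hG : (G.deleteEdges {e}).IsBipartite) {σ : Equiv.Perm V}
    (hσ : ∀ v ∈ σ.support, G.Adj (σ v) v) (hodd : Odd σ.support.card) :
    ∃ v, s(σ v, v) = e := by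
  by_contra! hne
  obtain ⟨C⟩ := hG
  set χ : V → ℤ := fun v => if C v = 0 then 1 else -1 with hχ
  have hneg : ∀ v ∈ σ.support, χ (σ v) = -χ v := by
    intro v hv
    have h : C (σ v) ≠ C v := C.valid (by
      simpa [SimpleGraph.deleteEdges_adj] using ⟨hσ v hv, hne v⟩)
    simp only [hχ]
    grind
  have hprod := Equiv.Perm.prod_comp σ σ.support χ (by intro; simp)
  rw [Finset.prod_congr rfl hneg, Finset.prod_neg, hodd.neg_one_pow] at hprod
  have h0 : ∏ v ∈ σ.support, χ v ≠ 0 :=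
    Finset.prod_ne_zero_iff.2 fun v _ => by simp only [hχ]; split_ifs <;> simp
  exact h0 (by linarith)

theorem isBipartite_deleteEdges_cycle [Fintype V] {G : SimpleGraph V} (hconn : G.Connected)
    {k : ℕ} [NeZero k] (hk3 : 3 ≤ k) {c : ZMod k → V} (hcinj : Function.Injective c)
    (hcadj : ∀ i : ZMod k, G.Adj (c i) (c (i + 1)))
    (hcard : Fintype.card V = G.edgeFinset.card) (i : ZMod k) :
    (G.deleteEdges {s(c i, c (i + 1))}).IsBipartite := by
  have hreach (n : ℕ) (hn : n < k) :
      (G.deleteEdges {s(c i, c (i + 1))}).Reachable (c (i + 1)) (c (i + 1 + n)) := by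
    induction n with
    | zero => simp
    | succ n ih =>
      refine (ih (by omega)).trans (SimpleGraph.Adj.reachable ?_)
      have hn1 : ((n + 1 : ℕ) : ZMod k) ≠ 0 := natCast_zmod_ne_zero n.succ_pos hn
      have h2 : ((2 : ℕ) : ZMod k) ≠ 0 := natCast_zmod_ne_zero two_pos hk3
      push_cast at hn1 h2 ⊢
      rw [SimpleGraph.deleteEdges_adj, ← add_assoc]
      refine ⟨hcadj _, ?_⟩
      simp only [Set.mem_singleton_iff, Sym2.eq_iff, hcinj.eq_iff]
      rintro (⟨h, -⟩ | ⟨h, h'⟩)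
      · exact hn1 (by linear_combination h)
      · exact h2 (by linear_combination h' - h)
  have hH : (G.deleteEdges {s(c i, c (i + 1))}).Connected := by
    refine hconn.connected_delete_edge_of_not_isBridge ?_
    rw [SimpleGraph.isBridge_iff, not_not]
    have := (hreach (k - 1) (by omega)).symm
    rwa [Nat.cast_sub (by omega), ZMod.natCast_self, Nat.cast_one,
      show i + 1 + (0 - 1) = i by ring] at this
  refine (SimpleGraph.isTree_iff_connected_and_card.2 ⟨hH, ?_⟩).isBipartite
  have hmem : s(c i, c (i + 1)) ∈ G.edgeSet := hcadj i
  rw [SimpleGraph.edgeSet_deleteEdges, Nat.card_eq_fintype_card (α := V), hcard,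
    Nat.card_coe_set_eq, Set.ncard_sdiff_singleton_add_one hmem, ← SimpleGraph.coe_edgeFinset,
    Set.ncard_coe_finset]

/-- The permutation shifting the vertices of a cycle `c` by `a` and fixing everything else. -/
def cycleShift [Fintype V] [DecidableEq V] {k : ℕ} [NeZero k] (c : ZMod k ↪ V) (a : ZMod k) :
    Equiv.Perm V :=
  Equiv.Perm.viaFintypeEmbedding (Equiv.addRight a) c

section cycleShift

variable [Fintype V] [DecidableEq V] {k : ℕ} [NeZero k] (c : ZMod k ↪ V)

theorem cycleShift_apply (a i : ZMod k) : cycleShift c a (c i) = c (i + a) :=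
  Equiv.Perm.viaFintypeEmbedding_apply_image _ _ _

theorem support_cycleShift {a : ZMod k} (ha : a ≠ 0) :
    (cycleShift c a).support = Finset.univ.map c := by
  ext v
  by_cases hv : v ∈ Set.range c
  · obtain ⟨i, rfl⟩ := hv
    simp [cycleShift_apply, ha]
  · have : cycleShift c a v = v := Equiv.Perm.viaFintypeEmbedding_apply_notMem_range _ _ hv
    simp_all

theorem card_support_cycleShift {a : ZMod k} (ha : a ≠ 0) :
    (cycleShift c a).support.card = k := by
  rw [support_cycleShift c ha, Finset.card_map, Finset.card_univ, ZMod.card]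

theorem sign_cycleShift_neg (a : ZMod k) :
    Equiv.Perm.sign (cycleShift c (-a)) = Equiv.Perm.sign (cycleShift c a) := by
  rw [cycleShift, cycleShift, Equiv.Perm.viaFintypeEmbedding_sign,
    Equiv.Perm.viaFintypeEmbedding_sign, ← Equiv.Perm.sign_inv (Equiv.addRight a),
    eq_inv_of_mul_eq_one_left (a := Equiv.addRight (-a)) (b := Equiv.addRight a) (by ext; simp)]

theorem cycleShift_injective : Function.Injective (cycleShift c) := by
  intro a b h
  have := cycleShift_apply c a 0
  rw [h, cycleShift_apply, c.injective.eq_iff] at this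
  simpa using this.symm

theorem eq_cycleShift {σ : Equiv.Perm V} {a : ZMod k} (ha : a ≠ 0) (hσ : σ.support.card = k)
    (h : ∀ i, σ (c i) = c (i + a)) : σ = cycleShift c a := by
  have hsupp : Finset.univ.map c = σ.support := by
    refine Finset.eq_of_subset_of_card_le (fun v hv => ?_) ?_
    · obtain ⟨i, -, rfl⟩ := Finset.mem_map.1 hv
      simp [h, ha]
    · rw [hσ, Finset.card_map, Finset.card_univ, ZMod.card]
  ext v
  by_cases hv : v ∈ Finset.univ.map c
  · obtain ⟨i, -, rfl⟩ := Finset.mem_map.1 hv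
    rw [h, cycleShift_apply]
  · rw [Equiv.Perm.notMem_support.1 (hsupp ▸ hv),
      Equiv.Perm.notMem_support.1 (support_cycleShift c ha ▸ hv)]

theorem eq_cycleShift_one_or_neg_one (hk3 : 3 ≤ k) {σ : Equiv.Perm V} (hσ : σ.support.card = k)
    (h : ∀ i, ∃ v, s(σ v, v) = s(c i, c (i + 1))) :
    σ = cycleShift c 1 ∨ σ = cycleShift c (-1) := by
  have h1 : (1 : ZMod k) ≠ 0 := by
    exact_mod_cast natCast_zmod_ne_zero (n := 1) one_pos (by omega)
  have h2 : (2 : ZMod k) ≠ 0 := by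
    exact_mod_cast natCast_zmod_ne_zero (n := 2) two_pos hk3
  have hor (i : ZMod k) : σ (c i) = c (i + 1) ∨ σ (c (i + 1)) = c i := by
    obtain ⟨v, hv⟩ := h i
    rcases Sym2.eq_iff.1 hv with ⟨h, rfl⟩ | ⟨h, rfl⟩
    exacts [.inr h, .inl h]
  by_cases hback : ∃ i, σ (c (i + 1)) = c i
  · right
    obtain ⟨i, hi⟩ := hback
    have hall (n : ℕ) : σ (c (i + n + 1)) = c (i + n) := by
      induction n with
      | zero => simpa using hi
      | succ n ih =>
        push_cast
        rw [← add_assoc]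
        refine (hor _).resolve_left fun hne => h2 ?_
        rw [ih, c.injective.eq_iff] at hne
        linear_combination -hne
    refine eq_cycleShift c (neg_ne_zero.2 h1) hσ fun j => ?_
    have := hall (j - 1 - i).val
    rwa [ZMod.natCast_zmod_val, show i + (j - 1 - i) + 1 = j by ring,
      show i + (j - 1 - i) = j + -1 by ring] at this
  · left
    push Not at hback
    exact eq_cycleShift c h1 hσ fun i => (hor i).resolve_right (hback i)

theorem prod_support_cycleShift {R : Type*} [CommMonoid R] {a : ZMod k} (ha : a ≠ 0)
    (M : V → V → R) (d : ZMod k → R) (hM : ∀ i, M (c (i + a)) (c i) = d (i + a)) :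
    ∏ v ∈ (cycleShift c a).support, M (cycleShift c a v) v = ∏ i, d i := by
  rw [support_cycleShift c ha, Finset.prod_map]
  simp only [cycleShift_apply, hM]
  exact Equiv.prod_comp (Equiv.addRight a) d

end cycleShift

theorem charpoly_twiceTransition_coeff [Fintype V] [DecidableEq V] {G : SimpleGraph V}
    (hconn : G.Connected) {k : ℕ} [NeZero k] (hk3 : 3 ≤ k) (hkodd : Odd k) (c : ZMod k ↪ V)
    (hcadj : ∀ i : ZMod k, G.Adj (c i) (c (i + 1)))
    (hcard : Fintype.card V = G.edgeFinset.card) :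
    (twiceTransition G).charpoly.coeff (Fintype.card V - k) =
      ((Equiv.Perm.sign (cycleShift c 1) : ℤ) : ℂ) *
        (2 * ∏ i, -(2 / (G.degree (c i) : ℂ))) := by
  have h1 : (1 : ZMod k) ≠ 0 := by
    exact_mod_cast natCast_zmod_ne_zero (n := 1) one_pos (by omega)
  have h2 : (2 : ZMod k) ≠ 0 := by
    exact_mod_cast natCast_zmod_ne_zero (n := 2) two_pos hk3
  have hne : cycleShift c 1 ≠ cycleShift c (-1) := fun h =>
    h2 (by linear_combination cycleShift_injective c h)
  have hkV : k ≤ Fintype.card V := by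
    simpa [ZMod.card] using Fintype.card_le_of_injective c c.injective
  rw [charpoly_coeff_of_diag_eq_zero _ (fun i => by simp [twiceTransition]) hkV]
  rw [← Finset.sum_subset (s₁ := {cycleShift c 1, cycleShift c (-1)})]
  · rw [Finset.sum_pair hne, sign_cycleShift_neg,
      prod_support_cycleShift c h1 (fun u v => -twiceTransition G u v) fun i =>
        -(2 / (G.degree (c i) : ℂ)),
      prod_support_cycleShift c (neg_ne_zero.2 h1) (fun u v => -twiceTransition G u v) fun i =>
        -(2 / (G.degree (c i) : ℂ))]
    · ring
    · intro i
      have := hcadj (i + -1)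
      rw [neg_add_cancel_right] at this
      simp [twiceTransition, this]
    · intro i
      simp [twiceTransition, (hcadj i).symm]
  · intro σ hσ
    rcases Finset.mem_insert.1 hσ with rfl | hσ
    · simpa using card_support_cycleShift c h1
    · rw [Finset.mem_singleton.1 hσ]
      simpa using card_support_cycleShift c (neg_ne_zero.2 h1)
  · intro σ hσ hσ'
    have hσk : σ.support.card = k := by simpa using hσ
    by_contra h0
    have hadj : ∀ v ∈ σ.support, G.Adj (σ v) v := by
      intro v hv
      have := Finset.prod_ne_zero_iff.1 (right_ne_zero_of_mul h0) v hv
      by_contra hv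
      simp [twiceTransition, hv] at this
    refine hσ' ?_
    rw [Finset.mem_insert, Finset.mem_singleton]
    exact eq_cycleShift_one_or_neg_one c hk3 hσk fun i => exists_eq_of_isBipartite_deleteEdges
      (isBipartite_deleteEdges_cycle hconn hk3 c.injective hcadj hcard i) hadj (hσk ▸ hkodd)

theorem eq_two_or_existsUnique_eq_four_of_prod_dvd {ι : Type*} [Fintype ι] {d : ι → ℕ}
    (hd : ∀ i, 2 ≤ d i) (h : ∏ i, d i ∣ 2 ^ (Fintype.card ι + 1)) :
    (∀ i, d i = 2) ∨ ∃! i, d i = 4 ∧ ∀ l, l ≠ i → d l = 2 := by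
  classical
  have hpow (i : ι) : ∃ b, d i = 2 ^ (b + 1) := by
    obtain ⟨m, -, hm⟩ := (Nat.dvd_prime_pow Nat.prime_two).1
      ((Finset.dvd_prod_of_mem d (Finset.mem_univ i)).trans h)
    cases m with
    | zero => have := hd i; omega
    | succ b => exact ⟨b, hm⟩
  choose b hb using hpow
  have hsum : ∑ i, b i ≤ 1 := by
    simp only [hb, Finset.prod_pow_eq_pow_sum] at h
    have := (Nat.pow_dvd_pow_iff_le_right (by norm_num)).1 h
    rw [Finset.sum_add_distrib] at this
    simp at this
    omega
  by_cases hall : ∀ i, b i = 0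
  · exact .inl fun i => by simp [hb, hall]
  · right
    push Not at hall
    obtain ⟨i, hi⟩ := hall
    have hi1 : b i ≤ 1 := (Finset.single_le_sum (fun _ _ => Nat.zero_le _)
      (Finset.mem_univ i)).trans hsum
    have hl (l : ι) (hl : l ≠ i) : d l = 2 := by
      have := (Finset.sum_le_sum_of_subset (f := b) (Finset.subset_univ {l, i})).trans hsum
      rw [Finset.sum_pair hl] at this
      rw [hb, show b l = 0 by omega, zero_add, pow_one]
    have hi4 : d i = 4 := by rw [hb, show b i = 1 by omega]; rfl
    refine ⟨i, ⟨hi4, hl⟩, fun j hj => ?_⟩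
    by_contra hne
    have := hl j hne
    omega

/-- Let `k ≥ 3` be odd and let `G ∈ 𝒪(k)` (a connected graph with as many
vertices as edges, containing a `k`-cycle `c 0 ∼ c 1 ∼ … ∼ c (k-1) ∼ c 0`). If `G` is
periodic, then either all cycle vertices have degree `2`, or there is a unique cycle vertex
of degree `4` while all the others have degree `2`. -/
theorem cycle_degree_of_periodic {V : Type*} [Fintype V] [DecidableEq V] (G : SimpleGraph V)
    (hconn : G.Connected) (k : ℕ) [NeZero k] (hk3 : 3 ≤ k) (hkodd : Odd k)
    (c : ZMod k → V) (hcinj : Function.Injective c)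
    (hcadj : ∀ i : ZMod k, G.Adj (c i) (c (i + 1)))
    (hcard : Fintype.card V = G.edgeFinset.card)
    (hper : IsPeriodic G) :
    (∀ i : ZMod k, G.degree (c i) = 2) ∨
      (∃! i : ZMod k, G.degree (c i) = 4 ∧ ∀ l : ZMod k, l ≠ i → G.degree (c l) = 2) := by
  have hdeg (v : V) : 0 < G.degree v := by
    have : Nontrivial V := ⟨_, _, (hcadj 0).ne⟩
    exact hconn.preconnected.degree_pos_of_nontrivial v
  have hint := isIntegral_charpoly_twiceTransition_coeff hdeg hper (Fintype.card V - k)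
  rw [charpoly_twiceTransition_coeff hconn hk3 hkodd ⟨c, hcinj⟩ hcadj hcard] at hint
  have hcast (s : ℤ) : (s : ℂ) * (2 * ∏ i, -(2 / (G.degree (c i) : ℂ))) =
      algebraMap ℚ ℂ (s * (2 * ∏ i, -(2 / (G.degree (c i) : ℚ)))) := by
    simp
  simp only [Function.Embedding.coeFn_mk] at hint
  rw [hcast, isIntegral_algebraMap_iff (algebraMap ℚ ℂ).injective,
    IsIntegrallyClosed.isIntegral_iff] at hint
  obtain ⟨m, hm⟩ := hint
  have hprod : (∏ i, (G.degree (c i) : ℚ)) ≠ 0 :=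
    Finset.prod_ne_zero_iff.2 fun i _ => by exact_mod_cast (hdeg _).ne'
  rw [Finset.prod_neg, Finset.prod_div_distrib, Finset.prod_const, Finset.card_univ,
    ZMod.card] at hm
  refine eq_two_or_existsUnique_eq_four_of_prod_dvd (fun i => ?_) ?_
  · have h2 : (2 : ZMod k) ≠ 0 := by
      exact_mod_cast natCast_zmod_ne_zero (n := 2) two_pos hk3
    have hne : c (i + 1) ≠ c (i - 1) := fun h => h2 (by linear_combination hcinj h)
    have hadj := (hcadj (i - 1)).symm
    rw [sub_add_cancel] at hadj
    rw [← SimpleGraph.card_neighborFinset_eq_degree, ← Finset.card_pair hne]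
    refine Finset.card_le_card fun v hv => ?_
    rcases Finset.mem_insert.1 hv with rfl | hv
    · simpa using hcadj i
    · rw [Finset.mem_singleton.1 hv]
      simpa using hadj
  · rw [ZMod.card, ← Int.natCast_dvd_natCast]
    set s : ℤ := (Equiv.Perm.sign (cycleShift ⟨c, hcinj⟩ 1) : ℤ) with hs
    have hs1 : s * s = 1 := by
      rw [hs, ← Units.val_mul, Int.units_mul_self, Units.val_one]
    have hk1 : ((-1 : ℤ) ^ k) * (-1) ^ k = 1 := by
      rw [← mul_pow]; simp
    refine ⟨s * (-1) ^ k * m, ?_⟩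
    have hs1' : (s : ℚ) * s = 1 := by exact_mod_cast hs1
    have hk1' : ((-1 : ℚ) ^ k) * (-1) ^ k = 1 := by exact_mod_cast hk1
    have : (2 : ℚ) ^ (k + 1) = (∏ i, (G.degree (c i) : ℚ)) * (s * (-1) ^ k * m) := by
      rw [eq_intCast] at hm
      rw [hm]
      field_simp
      linear_combination -2 * 2 ^ k * ((-1) ^ k * (-1) ^ k * hs1' + hk1')
    exact_mod_cast this

end GroverPaper
end

section
/- In the setting where G ∈ 𝒪(k) (k ≥ 3 odd) has unique cycle vertices u=u_0,u_1,…,u_{k−1} with deg(u)=4 and deg(u_i)=2 for i ≥ 1, for every t ≥ 1 with k+2t ≤ n one has ρ_{n−k−2t} = (−1)^{t+1} · 2^{−k} · K_{2t}. -/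
open Matrix

attribute [local instance] Classical.propDecidable

namespace GroverPaper

variable {V : Type*}

/-- `M(e) = 1/(deg x · deg y)` for an edge `e = xy`. -/
noncomputable def edgeM [Fintype V] (G : SimpleGraph V) : Sym2 V → ℝ :=
  Sym2.lift ⟨fun x y => 1 / ((G.degree x : ℝ) * (G.degree y : ℝ)), fun x y => by simp [mul_comm]⟩

/-- The sum, over all `i`-matchings contained in the edge collection `A`, of the product of
the `M`-values of the matching. (For `i = 0` this is `1`; if there is no such matching it
is `0`.) -/
noncomputable def matchSum [Fintype V] (G : SimpleGraph V) (A : Finset (Sym2 V)) (i : ℕ) : ℝ :=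
  ∑ S ∈ A.powerset.filter (fun S => S.card = i ∧
      ∀ e ∈ S, ∀ f ∈ S, e ≠ f → ∀ x : V, ¬(x ∈ e ∧ x ∈ f)),
    ∏ e ∈ S, edgeM G e

/-- The edges of `G` that neither lie on the cycle `c 0 ∼ c 1 ∼ … ∼ c (k-1) ∼ c 0` nor are
incident to `u = c 0`; this is the edge set `E_T` of the paper. -/
noncomputable def treeEdges [Fintype V] {k : ℕ} (G : SimpleGraph V) (c : ZMod k → V) :
    Finset (Sym2 V) :=
  G.edgeFinset.filter fun e => (∀ i : ZMod k, e ≠ s(c i, c (i + 1))) ∧ c 0 ∉ e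

/-- `K_{2i}` of the paper: the sum over all `i`-matchings in `E_T` of the products of the
`M`-values. -/
noncomputable def Km [Fintype V] {k : ℕ} (G : SimpleGraph V) (c : ZMod k → V) (i : ℕ) : ℝ :=
  matchSum G (treeEdges G c) i

/-- `K^g_{2i}(2,…,r)` of the paper, where `v` is the path `u = v 0, v 1, v 2, …` so that
`g_j = v_{j-1} v_j`: the sum over all `i`-matchings in `E_T ∖ {g_2,…,g_r}`. -/
noncomputable def Kg [Fintype V] {k : ℕ} (G : SimpleGraph V) (c : ZMod k → V)
    (v : ℕ → V) (i r : ℕ) : ℝ :=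
  matchSum G (treeEdges G c \ (Finset.Icc 2 r).image fun j => s(v (j - 1), v j)) i

/-- `L_{2i}(2,…,r) = K^g_{2i}(2,…,r) + K^h_{2i}(2,…,r)` of the paper. -/
noncomputable def Lm [Fintype V] {k : ℕ} (G : SimpleGraph V) (c : ZMod k → V)
    (v w : ℕ → V) (i r : ℕ) : ℝ :=
  Kg G c v i r + Kg G c w i r

theorem coeff_charpoly_eq_sum_perm {n R : Type*} [Fintype n] [DecidableEq n] [CommRing R]
    (M : Matrix n n R) (hM : ∀ i, M i i = 0) (j : ℕ) (hj : j ≤ Fintype.card n) :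
    M.charpoly.coeff (Fintype.card n - j) =
      ∑ σ : Equiv.Perm n with σ.support.card = j,
        ((Equiv.Perm.sign σ : ℤ) : R) * ((-1) ^ j * ∏ i ∈ σ.support, M (σ i) i) := by
  rw [Matrix.charpoly, Matrix.det_apply, Polynomial.finsetSum_coeff, Finset.sum_filter]
  refine Finset.sum_congr rfl fun σ _ => ?_
  have hprod : ∏ i, M.charmatrix (σ i) i =
      Polynomial.C (∏ i ∈ σ.support, -M (σ i) i) *
        Polynomial.X ^ (Fintype.card n - σ.support.card) := by
    rw [← Finset.prod_mul_prod_compl σ.support, map_prod, ← Finset.card_compl,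
      ← Finset.prod_const]
    congr 1
    · refine Finset.prod_congr rfl fun i hi => ?_
      rw [Matrix.charmatrix_apply_ne _ _ _ (Equiv.Perm.mem_support.1 hi), map_neg]
    · refine Finset.prod_congr rfl fun i hi => ?_
      have hi : σ i = i := by simpa using hi
      rw [hi, Matrix.charmatrix_apply_eq, hM, map_zero, sub_zero]
  have hle : σ.support.card ≤ Fintype.card n := Finset.card_le_univ _
  rw [hprod, Units.smul_def, zsmul_eq_mul, ← Polynomial.C_eq_intCast, Polynomial.coeff_C_mul,
    Polynomial.coeff_C_mul_X_pow]
  split_ifs with h1 h2 h2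
  · rw [Finset.prod_neg, h2]
  · omega
  · omega
  · simp

theorem sign_of_involutive {α : Type*} [Fintype α] [DecidableEq α] (τ : Equiv.Perm α)
    (hτ : ∀ v, τ (τ v) = v) (t : ℕ) (hcard : τ.support.card = 2 * t) :
    Equiv.Perm.sign τ = (-1) ^ t := by
  have h2 : ∀ m ∈ τ.cycleType, m = 2 := fun m hm => by
    have h1 := Equiv.Perm.two_le_of_mem_cycleType hm
    have h3 : orderOf τ ∣ 2 := orderOf_dvd_of_pow_eq_one (by ext v; simp [pow_two, hτ])
    have := Nat.le_of_dvd (by norm_num) ((Equiv.Perm.dvd_of_mem_cycleType hm).trans h3)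
    omega
  have h3 := Multiset.eq_replicate_card.2 h2
  have h4 : τ.cycleType.sum = 2 * t := by rw [Equiv.Perm.sum_cycleType, hcard]
  have h5 : τ.cycleType.card = t := by
    have := congrArg Multiset.sum h3
    rw [Multiset.sum_replicate, h4, smul_eq_mul] at this
    omega
  rw [Equiv.Perm.sign_of_cycleType, h4, h5, pow_add, pow_mul]
  simp

/-- `p` sends each vertex to its successor on the cycle or, off the cycle, to a neighbour of
smaller height `d`; every edge of `G` joins some vertex to its image under `p`. -/
structure IsParentMap {V : Type*} {k : ℕ} (G : SimpleGraph V) (c : ZMod k → V) (p : V → V)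
    (d : V → ℕ) : Prop where
  cycle : ∀ i, p (c i) = c (i + 1)
  lt : ∀ v ∉ Set.range c, d (p v) < d v
  adj_iff : ∀ v w, G.Adj v w ↔ p v = w ∨ p w = v

theorem exists_adj_dist_lt {V : Type*} {G : SimpleGraph V} (hconn : G.Connected) {v w : V}
    (hvw : v ≠ w) : ∃ x, G.Adj v x ∧ G.dist x w < G.dist v w := by
  obtain ⟨q, hq⟩ := hconn.exists_walk_length_eq_dist v w
  cases q with
  | nil => exact absurd rfl hvw
  | cons h q =>
    refine ⟨_, h, ?_⟩
    have := SimpleGraph.dist_le q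
    rw [SimpleGraph.Walk.length_cons] at hq
    omega

theorem cycle_add_two_ne {k : ℕ} (hk3 : 3 ≤ k) (i : ZMod k) : i + 1 + 1 ≠ i := by
  intro h
  have h2 : ((2 : ℕ) : ZMod k) = 0 := by
    push_cast
    linear_combination h
  rw [ZMod.natCast_eq_zero_iff] at h2
  have := Nat.le_of_dvd (by norm_num) h2
  omega

theorem exists_isParentMap {V : Type*} [Fintype V] (G : SimpleGraph V)
    (hconn : G.Connected) (k : ℕ) (hk3 : 3 ≤ k)
    (c : ZMod k → V) (hcinj : Function.Injective c)
    (hcadj : ∀ i : ZMod k, G.Adj (c i) (c (i + 1)))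
    (hcard : Fintype.card V = G.edgeFinset.card) :
    ∃ p d, IsParentMap G c p d := by
  set d : V → ℕ := fun v => G.dist v (c 0)
  have hex : ∀ v, ∃ w, G.Adj v w ∧ (∀ i, v = c i → w = c (i + 1)) ∧
      (v ∉ Set.range c → d w < d v) := by
    intro v
    by_cases hv : v ∈ Set.range c
    · obtain ⟨i, rfl⟩ := hv
      exact ⟨c (i + 1), hcadj i, fun j hj => by rw [hcinj hj], fun h => absurd ⟨i, rfl⟩ h⟩
    · obtain ⟨w, hw, hlt⟩ := exists_adj_dist_lt hconn (v := v) (w := c 0)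
        (fun h => hv ⟨0, h.symm⟩)
      exact ⟨w, hw, fun i hi => absurd ⟨i, hi.symm⟩ hv, fun _ => hlt⟩
  choose p hadj hcyc hlt using hex
  have hcyc' : ∀ i, p (c i) = c (i + 1) := fun i => hcyc _ i rfl
  refine ⟨p, d, hcyc', hlt, fun v w => ⟨fun h => ?_, ?_⟩⟩
  · let f : V → G.edgeFinset := fun v => ⟨s(v, p v), by simpa using hadj v⟩
    have hinj : Function.Injective f := by
      intro x y hxy
      have hxy : s(x, p x) = s(y, p y) := congrArg Subtype.val hxy
      rw [Sym2.eq_iff] at hxy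
      rcases hxy with ⟨h, -⟩ | ⟨h1, h2⟩
      · exact h
      exfalso
      by_cases hx : x ∈ Set.range c
      · obtain ⟨i, rfl⟩ := hx
        rw [← h2, hcyc', hcyc'] at h1
        exact cycle_add_two_ne hk3 i (hcinj h1).symm
      by_cases hy : y ∈ Set.range c
      · obtain ⟨i, rfl⟩ := hy
        exact hx ⟨i + 1, by rw [h1, hcyc']⟩
      have h3 := hlt x hx
      have h4 := hlt y hy
      rw [h2] at h3
      rw [← h1] at h4
      omega
    have hbij := (Fintype.bijective_iff_injective_and_card f).2 ⟨hinj, by rwa [Fintype.card_coe]⟩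
    obtain ⟨x, hx⟩ := hbij.2 ⟨s(v, w), by simpa using h⟩
    have hx : s(x, p x) = s(v, w) := congrArg Subtype.val hx
    rw [Sym2.eq_iff] at hx
    rcases hx with ⟨rfl, hw⟩ | ⟨rfl, hv⟩
    · exact Or.inl hw
    · exact Or.inr hv
  · rintro (rfl | rfl)
    · exact hadj v
    · exact (hadj w).symm

theorem adj_inv_apply {V : Type*} {G : SimpleGraph V} {σ : Equiv.Perm V}
    (hσ : ∀ v, σ v ≠ v → G.Adj (σ v) v) (v : V) (hv : σ⁻¹ v ≠ v) : G.Adj (σ⁻¹ v) v := by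
  have := hσ (σ⁻¹ v) (fun h => hv (by simpa using h.symm))
  simpa using this.symm

namespace IsParentMap

variable {V : Type*} {k : ℕ} {G : SimpleGraph V} {c : ZMod k → V} {p : V → V} {d : V → ℕ}

theorem notMem_range_of_apply (h : IsParentMap G c p d) {v : V} (hv : p v ∉ Set.range c) :
    v ∉ Set.range c := by
  rintro ⟨i, rfl⟩
  exact hv ⟨i + 1, (h.cycle i).symm⟩

theorem iterate_add_le (h : IsParentMap G c p d) (n : ℕ) :
    ∀ v, p^[n] v ∉ Set.range c → v ∉ Set.range c ∧ d (p^[n] v) + n ≤ d v := by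
  induction n with
  | zero => intro v hv; exact ⟨hv, le_rfl⟩
  | succ n ih =>
    intro v hv
    rw [Function.iterate_succ_apply] at hv ⊢
    obtain ⟨h1, h2⟩ := ih _ hv
    have h3 := h.notMem_range_of_apply h1
    exact ⟨h3, by have := h.lt v h3; omega⟩

theorem apply_apply_of_notMem [Finite V] (h : IsParentMap G c p d) (σ : Equiv.Perm V)
    (hσ : ∀ v, σ v ≠ v → G.Adj (σ v) v) {v : V} (hv : v ∉ Set.range c) (hσv : σ v = p v) :
    σ (p v) = v := by
  by_contra hne
  set D : Set V := {w | ∃ n, p^[n] w = v}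
  have hpv : p v ∉ D := by
    rintro ⟨n, hn⟩
    have := (h.iterate_add_le (n + 1) v (by rwa [Function.iterate_succ_apply, hn])).2
    rw [Function.iterate_succ_apply, hn] at this
    omega
  have hmaps : Set.MapsTo σ Dᶜ Dᶜ := by
    intro w hw hw'
    by_cases hww : σ w = w
    · exact hw (hww ▸ hw')
    rcases (h.adj_iff _ _).1 (hσ w hww) with h1 | h1
    · obtain ⟨n, hn⟩ := hw'
      cases n with
      | zero =>
        have hn : σ w = v := hn
        rw [hn] at h1
        rw [← h1] at hn
        exact hne hn
      | succ n =>
        rw [Function.iterate_succ_apply, h1] at hn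
        exact hw ⟨n, hn⟩
    · obtain ⟨n, hn⟩ := hw'
      exact hw ⟨n + 1, by rw [Function.iterate_succ_apply, h1, hn]⟩
  have hiter : ∀ n, (σ ^ n) (p v) ∈ Dᶜ := by
    intro n
    induction n with
    | zero => exact hpv
    | succ n ih => rw [pow_succ']; exact hmaps ih
  have hpos : 0 < orderOf σ := (isOfFinOrder_of_finite σ).orderOf_pos
  have h2 : (σ ^ (orderOf σ - 1)) (p v) = v := by
    rw [← hσv, ← Equiv.Perm.mul_apply, ← pow_succ, Nat.sub_add_cancel hpos, pow_orderOf_eq_one,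
      Equiv.Perm.one_apply]
  exact hiter (orderOf σ - 1) ⟨0, h2⟩

theorem eq_of_notMem [Finite V] (h : IsParentMap G c p d) (σ : Equiv.Perm V)
    (hσ : ∀ v, σ v ≠ v → G.Adj (σ v) v) {v : V} (hv : v ∉ Set.range c) (hσv : σ (p v) = v) :
    σ v = p v := by
  have hinv := h.apply_apply_of_notMem σ⁻¹ (adj_inv_apply hσ) hv (by
    rw [Equiv.Perm.inv_eq_iff_eq]; exact hσv.symm)
  rw [Equiv.Perm.inv_eq_iff_eq] at hinv
  exact hinv.symm

theorem forward_step [Finite V] (h : IsParentMap G c p d) (hk3 : 3 ≤ k)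
    (hcinj : Function.Injective c) (σ : Equiv.Perm V)
    (hσ : ∀ v, σ v ≠ v → G.Adj (σ v) v) {i : ZMod k} (h1 : σ (c i) = c (i + 1))
    (h2 : σ (σ (c i)) ≠ c i) :
    σ (c (i + 1)) = c (i + 1 + 1) ∧ σ (σ (c (i + 1))) ≠ c (i + 1) := by
  rw [h1] at h2
  have hadj : G.Adj (c i) (c (i + 1)) := (h.adj_iff _ _).2 (Or.inl (h.cycle i))
  have hne : σ (c (i + 1)) ≠ c (i + 1) := fun h3 => hadj.ne (σ.injective (h1.trans h3.symm))
  have hstep : σ (c (i + 1)) = c (i + 1 + 1) := by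
    rcases (h.adj_iff _ _).1 (hσ _ hne) with h3 | h3
    · exfalso
      by_cases hx : σ (c (i + 1)) ∈ Set.range c
      · obtain ⟨j, hj⟩ := hx
        rw [← hj, h.cycle] at h3
        rw [← hj, add_right_cancel (hcinj h3)] at h2
        exact h2 rfl
      · have h4 := h.eq_of_notMem σ hσ hx (by rw [h3])
        rw [h3] at h4
        exact h2 (σ.injective (h4.trans h1.symm))
    · rw [← h3, h.cycle]
  refine ⟨hstep, fun h3 => ?_⟩
  have h4 := σ.injective (h3.trans h1.symm)
  rw [hstep] at h4
  exact cycle_add_two_ne hk3 i (hcinj h4)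

theorem forward_all [Finite V] [NeZero k] (h : IsParentMap G c p d) (hk3 : 3 ≤ k)
    (hcinj : Function.Injective c) (σ : Equiv.Perm V)
    (hσ : ∀ v, σ v ≠ v → G.Adj (σ v) v) {i : ZMod k} (h1 : σ (c i) = c (i + 1))
    (h2 : σ (σ (c i)) ≠ c i) (j : ZMod k) : σ (c j) = c (j + 1) := by
  have hn : ∀ n : ℕ, σ (c (i + n)) = c (i + n + 1) ∧ σ (σ (c (i + n))) ≠ c (i + n) := by
    intro n
    induction n with
    | zero => simpa using ⟨h1, h2⟩
    | succ n ih =>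
      have := h.forward_step hk3 hcinj σ hσ ih.1 ih.2
      simpa [add_assoc] using this
  have := (hn (j - i).val).1
  simpa using this

/-- A permutation along edges which is not involutive at `v` rotates the whole cycle. -/
theorem rotates_of_ne [Finite V] [NeZero k] (h : IsParentMap G c p d) (hk3 : 3 ≤ k)
    (hcinj : Function.Injective c) (σ : Equiv.Perm V)
    (hσ : ∀ v, σ v ≠ v → G.Adj (σ v) v) {v : V} (hv : σ (σ v) ≠ v) :
    v ∈ Set.range c ∧ ((∀ i, σ (c i) = c (i + 1)) ∨ ∀ i, σ⁻¹ (c i) = c (i + 1)) := by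
  have hne : σ v ≠ v := fun h => hv (by rw [h, h])
  rcases (h.adj_iff _ _).1 (hσ v hne) with h1 | h1
  · have hw : σ v ∈ Set.range c := by
      by_contra hw
      exact hv ((h.eq_of_notMem σ hσ hw (by rw [h1])).trans h1)
    obtain ⟨i, hi⟩ := hw
    rw [← hi, h.cycle] at h1
    subst h1
    refine ⟨⟨_, rfl⟩, Or.inr (h.forward_all hk3 hcinj σ⁻¹ (adj_inv_apply hσ) (i := i) ?_ ?_)⟩
    · rw [Equiv.Perm.inv_eq_iff_eq, hi]
    · rw [Ne, Equiv.Perm.inv_eq_iff_eq, Equiv.Perm.inv_eq_iff_eq, hi]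
      exact fun h => hv (σ.injective h.symm)
  · have hw : v ∈ Set.range c := by
      by_contra hw
      exact hv (by rw [← h1]; exact h.apply_apply_of_notMem σ hσ hw h1.symm)
    obtain ⟨i, rfl⟩ := hw
    exact ⟨⟨i, rfl⟩, Or.inl (h.forward_all hk3 hcinj σ hσ (by rw [← h1, h.cycle]) hv)⟩

end IsParentMap

section Involution

variable {V : Type*} [Fintype V] [DecidableEq V] {τ : Equiv.Perm V}

theorem filter_support_of_involutive (hτ : ∀ v, τ (τ v) = v) {v : V} (hv : v ∈ τ.support) :
    (τ.support.filter fun w => s(w, τ w) = s(v, τ v)) = {v, τ v} := by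
  ext w
  simp only [Finset.mem_filter, Finset.mem_insert, Finset.mem_singleton, Sym2.eq_iff]
  constructor
  · rintro ⟨-, ⟨h, -⟩ | ⟨h, -⟩⟩
    · exact Or.inl h
    · exact Or.inr h
  · rintro (rfl | rfl)
    · exact ⟨hv, Or.inl ⟨rfl, rfl⟩⟩
    · exact ⟨Equiv.Perm.apply_mem_support.2 hv, Or.inr ⟨rfl, hτ v⟩⟩

theorem card_support_of_involutive (hτ : ∀ v, τ (τ v) = v) :
    τ.support.card = 2 * (τ.support.image fun v => s(v, τ v)).card := by
  rw [Finset.card_eq_sum_card_image (fun v => s(v, τ v)), mul_comm, ← smul_eq_mul,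
    ← Finset.sum_const]
  refine Finset.sum_congr rfl fun e he => ?_
  obtain ⟨v, hv, rfl⟩ := Finset.mem_image.1 he
  rw [filter_support_of_involutive hτ hv, Finset.card_pair]
  exact (Equiv.Perm.mem_support.1 hv).symm

theorem prod_edgeM_image_of_involutive (G : SimpleGraph V) (hτ : ∀ v, τ (τ v) = v) :
    ∏ e ∈ τ.support.image (fun v => s(v, τ v)), edgeM G e =
      ∏ v ∈ τ.support, (G.degree v : ℝ)⁻¹ := by
  rw [← Finset.prod_fiberwise_of_maps_to (g := fun v => s(v, τ v))
    (fun v hv => Finset.mem_image_of_mem (fun v => s(v, τ v)) hv)]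
  refine Finset.prod_congr rfl fun e he => ?_
  obtain ⟨v, hv, rfl⟩ := Finset.mem_image.1 he
  rw [filter_support_of_involutive hτ hv, Finset.prod_pair (Equiv.Perm.mem_support.1 hv).symm]
  simp [edgeM, mul_comm]

/-- Matchings inside `A` correspond to the involutions moving vertices only along `A`. -/
theorem sum_involutive_eq_matchSum (G : SimpleGraph V) (A : Finset (Sym2 V))
    (hA : ∀ v, s(v, v) ∉ A) (t : ℕ) :
    ∑ τ : Equiv.Perm V with (∀ v, τ (τ v) = v) ∧ (∀ v, τ v ≠ v → s(v, τ v) ∈ A) ∧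
        τ.support.card = 2 * t, ∏ v ∈ τ.support, (G.degree v : ℝ)⁻¹ = matchSum G A t := by
  rw [matchSum]
  refine Finset.sum_bij (fun τ _ => τ.support.image fun v => s(v, τ v)) ?_ ?_ ?_ ?_
  · intro τ hτ
    simp only [Finset.mem_filter, Finset.mem_univ, true_and] at hτ
    obtain ⟨hinv, hmem, hcard⟩ := hτ
    simp only [Finset.mem_filter, Finset.mem_powerset]
    refine ⟨?_, ?_, ?_⟩
    · intro e he
      obtain ⟨v, hv, rfl⟩ := Finset.mem_image.1 he
      exact hmem v (Equiv.Perm.mem_support.1 hv)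
    · have := card_support_of_involutive hinv
      omega
    · have key : ∀ e ∈ τ.support.image (fun v => s(v, τ v)), ∀ x ∈ e, e = s(x, τ x) := by
        intro e he x hx
        obtain ⟨v, -, rfl⟩ := Finset.mem_image.1 he
        rcases Sym2.mem_iff.1 hx with rfl | rfl
        · rfl
        · rw [hinv, Sym2.eq_swap]
      rintro e he f hf hef x ⟨hxe, hxf⟩
      exact hef ((key e he x hxe).trans (key f hf x hxf).symm)
  · have key : ∀ τ₁ τ₂ : Equiv.Perm V, (∀ v, τ₂ (τ₂ v) = v) →
        (τ₁.support.image fun v => s(v, τ₁ v)) = (τ₂.support.image fun v => s(v, τ₂ v)) →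
        ∀ v, τ₁ v ≠ v → τ₂ v = τ₁ v := by
      intro τ₁ τ₂ h2 h v hv
      have hm : s(v, τ₁ v) ∈ τ₂.support.image fun v => s(v, τ₂ v) :=
        h ▸ Finset.mem_image.2 ⟨v, Equiv.Perm.mem_support.2 hv, rfl⟩
      obtain ⟨w, -, hw⟩ := Finset.mem_image.1 hm
      rcases Sym2.eq_iff.1 hw with ⟨rfl, hw⟩ | ⟨rfl, hw⟩
      · exact hw
      · have h3 := h2 (τ₁ v)
        rwa [hw] at h3
    intro τ₁ h1 τ₂ h2 h
    simp only [Finset.mem_filter, Finset.mem_univ, true_and] at h1 h2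
    ext v
    by_cases hv : τ₁ v = v
    · by_cases hv2 : τ₂ v = v
      · rw [hv, hv2]
      · exact key τ₂ τ₁ h1.1 h.symm v hv2
    · exact (key τ₁ τ₂ h2.1 h v hv).symm
  · intro S hS
    simp only [Finset.mem_filter, Finset.mem_powerset] at hS
    obtain ⟨hSA, hcard, hS⟩ := hS
    have huniq : ∀ v w w', s(v, w) ∈ S → s(v, w') ∈ S → w = w' := by
      intro v w w' h1 h2
      by_contra hne
      exact hS _ h1 _ h2 (fun h => hne (Sym2.congr_right.1 h)) v ⟨by simp, by simp⟩
    set f : V → V := fun v => if h : ∃ w, s(v, w) ∈ S then h.choose else v with hf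
    have hf1 : ∀ v w, s(v, w) ∈ S → f v = w := by
      intro v w h
      have hex : ∃ w, s(v, w) ∈ S := ⟨w, h⟩
      rw [hf]
      simp only [dif_pos hex]
      exact huniq v _ _ hex.choose_spec h
    have hf2 : ∀ v, f v ≠ v → s(v, f v) ∈ S := by
      intro v h
      by_cases hex : ∃ w, s(v, w) ∈ S
      · obtain ⟨w, hw⟩ := hex
        rwa [hf1 v w hw]
      · exact absurd (by rw [hf]; simp only [dif_neg hex]) h
    have hinv : Function.Involutive f := by
      intro v
      by_cases hv : f v = v
      · rw [hv, hv]
      · exact hf1 _ _ (by rw [Sym2.eq_swap]; exact hf2 v hv)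
    have himg : ((hinv.toPerm f).support.image fun v => s(v, hinv.toPerm f v)) = S := by
      ext e
      simp only [Finset.mem_image, Equiv.Perm.mem_support, Function.Involutive.coe_toPerm]
      constructor
      · rintro ⟨v, hv, rfl⟩
        exact hf2 v hv
      · induction e with
        | _ v w =>
          intro he
          have hw := hf1 v w he
          refine ⟨v, fun h => hA v (hSA ?_), by rw [hw]⟩
          rwa [← hw, h] at he
    refine ⟨hinv.toPerm f, ?_, himg⟩
    simp only [Finset.mem_filter, Finset.mem_univ, true_and]
    refine ⟨hinv, fun v hv => hSA (hf2 v hv), ?_⟩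
    rw [card_support_of_involutive (τ := hinv.toPerm f) hinv, himg, hcard]
  · intro τ hτ
    simp only [Finset.mem_filter, Finset.mem_univ, true_and] at hτ
    exact (prod_edgeM_image_of_involutive G hτ.1).symm

end Involution

section Rotation

variable {V : Type*} [DecidableEq V] {k : ℕ} [NeZero k]

/-- The permutation rotating the cycle `c` by one step and fixing all other vertices. -/
noncomputable def rotation (c : ZMod k → V) (hc : Function.Injective c) : Equiv.Perm V :=
  (Equiv.addRight (1 : ZMod k)).viaFintypeEmbedding ⟨c, hc⟩

variable (c : ZMod k → V) (hc : Function.Injective c)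

theorem rotation_apply (i : ZMod k) : rotation c hc (c i) = c (i + 1) :=
  Equiv.Perm.viaFintypeEmbedding_apply_image _ ⟨c, hc⟩ i

theorem rotation_apply_of_notMem {v : V} (hv : v ∉ Set.range c) : rotation c hc v = v :=
  Equiv.Perm.viaFintypeEmbedding_apply_notMem_range _ ⟨c, hc⟩ hv

theorem sign_rotation [Fintype V] (hk : Odd k) : Equiv.Perm.sign (rotation c hc) = 1 := by
  rw [rotation, Equiv.Perm.viaFintypeEmbedding_sign]
  have h : (Equiv.addRight (1 : ZMod k)) ^ k = 1 := by
    ext i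
    simp
  have h2 := congrArg Equiv.Perm.sign h
  rw [map_pow, map_one] at h2
  rcases Int.units_eq_one_or (Equiv.Perm.sign (Equiv.addRight (1 : ZMod k))) with h3 | h3
  · exact h3
  · rw [h3, hk.neg_one_pow] at h2
    exact absurd h2 (by decide)

theorem support_rotation [Fintype V] (hk : 2 ≤ k) :
    (rotation c hc).support = Finset.univ.image c := by
  ext v
  simp only [Equiv.Perm.mem_support, Finset.mem_image, Finset.mem_univ, true_and]
  constructor
  · intro h
    by_contra hv
    exact h (rotation_apply_of_notMem c hc hv)
  · rintro ⟨i, rfl⟩ h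
    rw [rotation_apply] at h
    have : Fact (1 < k) := ⟨hk⟩
    simpa using hc h

end Rotation

section Weight

variable {V : Type*} [Fintype V] [DecidableEq V] {k : ℕ} {G : SimpleGraph V}

theorem prod_transition_support (σ : Equiv.Perm V) (hσ : ∀ v, σ v ≠ v → G.Adj (σ v) v) :
    ∏ v ∈ σ.support, transition G (σ v) v = ∏ v ∈ σ.support, (G.degree v : ℝ)⁻¹ := by
  rw [← Equiv.Perm.prod_comp σ σ.support (fun v => (G.degree v : ℝ)⁻¹) (by intro v; simp)]
  refine Finset.prod_congr rfl fun v hv => ?_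
  simp [transition, hσ v (Equiv.Perm.mem_support.1 hv)]

theorem exists_adj_of_prod_ne_zero (σ : Equiv.Perm V)
    (h : ∏ v ∈ σ.support, transition G (σ v) v ≠ 0) (v : V) (hv : σ v ≠ v) :
    G.Adj (σ v) v := by
  by_contra hadj
  exact h (Finset.prod_eq_zero (Equiv.Perm.mem_support.2 hv) (by simp [transition, hadj]))

theorem mem_treeEdges_iff [NeZero k] (hk3 : 3 ≤ k) {c : ZMod k → V}
    (hcinj : Function.Injective c) (hcadj : ∀ i : ZMod k, G.Adj (c i) (c (i + 1)))
    (hdegc : ∀ i : ZMod k, i ≠ 0 → G.degree (c i) = 2) (v w : V) :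
    s(v, w) ∈ treeEdges G c ↔ G.Adj v w ∧ v ∉ Set.range c ∧ w ∉ Set.range c := by
  have hnbr : ∀ i : ZMod k, i ≠ 0 → ∀ x, G.Adj (c i) x → x = c (i + 1) ∨ x = c (i - 1) := by
    intro i hi x hx
    have hsub : {c (i + 1), c (i - 1)} ⊆ G.neighborFinset (c i) := by
      intro y hy
      rw [SimpleGraph.mem_neighborFinset]
      rcases Finset.mem_insert.1 hy with rfl | hy
      · exact hcadj i
      · rw [Finset.mem_singleton.1 hy]
        simpa using (hcadj (i - 1)).symm
    have hne : c (i + 1) ≠ c (i - 1) := fun h =>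
      cycle_add_two_ne hk3 (i - 1) (by simpa using hcinj h)
    have heq := Finset.eq_of_subset_of_card_le hsub (by
      rw [SimpleGraph.card_neighborFinset_eq_degree, hdegc i hi, Finset.card_pair hne])
    have hx : x ∈ G.neighborFinset (c i) := by simpa using hx
    rw [← heq] at hx
    simpa using hx
  simp only [treeEdges, Finset.mem_filter, SimpleGraph.mem_edgeFinset, SimpleGraph.mem_edgeSet,
    Sym2.mem_iff, not_or]
  have key : ∀ v w, G.Adj v w → (∀ i : ZMod k, s(v, w) ≠ s(c i, c (i + 1))) → c 0 ≠ v →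
      v ∉ Set.range c := by
    rintro v w hadj hne h0 ⟨i, rfl⟩
    rcases hnbr i (fun h => h0 (by rw [h])) w hadj with rfl | rfl
    · exact hne i rfl
    · exact hne (i - 1) (by rw [Sym2.eq_swap, sub_add_cancel])
  constructor
  · rintro ⟨hadj, hne, hv, hw⟩
    exact ⟨hadj, key v w hadj hne hv,
      key w v hadj.symm (fun i => by rw [Sym2.eq_swap]; exact hne i) hw⟩
  · rintro ⟨hadj, hv, hw⟩
    refine ⟨hadj, fun i h => ?_, fun h => hv ⟨0, h⟩, fun h => hw ⟨0, h⟩⟩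
    rcases Sym2.eq_iff.1 h with ⟨rfl, -⟩ | ⟨rfl, -⟩
    · exact hv ⟨_, rfl⟩
    · exact hv ⟨_, rfl⟩

theorem prod_inv_degree_cycle [NeZero k] {c : ZMod k → V} (hcinj : Function.Injective c)
    (hdegu : G.degree (c 0) = 4) (hdegc : ∀ i : ZMod k, i ≠ 0 → G.degree (c i) = 2) :
    ∏ v ∈ Finset.univ.image c, (G.degree v : ℝ)⁻¹ = 1 / 2 ^ (k + 1) := by
  rw [Finset.prod_image hcinj.injOn, ← Finset.mul_prod_erase _ _ (Finset.mem_univ 0), hdegu,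
    Finset.prod_congr rfl (g := fun _ => (2 : ℝ)⁻¹) fun i hi => by
      rw [hdegc i (Finset.ne_of_mem_erase hi)]; norm_num,
    Finset.prod_const, Finset.card_erase_of_mem (Finset.mem_univ _), Finset.card_univ, ZMod.card]
  obtain ⟨m, rfl⟩ := Nat.exists_eq_succ_of_ne_zero (NeZero.ne k)
  simp [pow_succ]
  ring

end Weight

section Forward

variable {V : Type*} [Fintype V] [DecidableEq V] {k : ℕ} {G : SimpleGraph V}

/-- The permutations that move vertices along edges of `G`, move exactly `j` vertices and rotate
the cycle `c` forward. -/
noncomputable def forwardPerms (G : SimpleGraph V) (c : ZMod k → V) (j : ℕ) :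
    Finset (Equiv.Perm V) :=
  {σ | (∀ v, σ v ≠ v → G.Adj (σ v) v) ∧ σ.support.card = j ∧ ∀ i, σ (c i) = c (i + 1)}

theorem mem_forwardPerms {c : ZMod k → V} {j : ℕ} {σ : Equiv.Perm V} :
    σ ∈ forwardPerms G c j ↔
      (∀ v, σ v ≠ v → G.Adj (σ v) v) ∧ σ.support.card = j ∧ ∀ i, σ (c i) = c (i + 1) := by
  simp [forwardPerms]

theorem sum_forwardPerms [NeZero k] {c : ZMod k → V} {p : V → V} {d : V → ℕ}
    (h : IsParentMap G c p d) (hk3 : 3 ≤ k) (hkodd : Odd k) (hcinj : Function.Injective c)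
    (hcadj : ∀ i : ZMod k, G.Adj (c i) (c (i + 1)))
    (hdegu : G.degree (c 0) = 4) (hdegc : ∀ i : ZMod k, i ≠ 0 → G.degree (c i) = 2) (t : ℕ) :
    ∑ σ ∈ forwardPerms G c (k + 2 * t),
        ((Equiv.Perm.sign σ : ℤ) : ℝ) * ∏ v ∈ σ.support, (G.degree v : ℝ)⁻¹ =
      (-1) ^ t / 2 ^ (k + 1) * Km G c t := by
  have htree := mem_treeEdges_iff hk3 hcinj hcadj hdegc
  have hsupp := support_rotation c hcinj (by omega)
  rw [Km, ← sum_involutive_eq_matchSum G (treeEdges G c)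
    (fun v hv => G.irrefl ((htree v v).1 hv).1) t, Finset.mul_sum]
  have hdisj : ∀ τ : Equiv.Perm V, (∀ i, τ (c i) = c i) → (rotation c hcinj).Disjoint τ := by
    intro τ hτ v
    by_cases hv : v ∈ Set.range c
    · obtain ⟨i, rfl⟩ := hv
      exact Or.inr (hτ i)
    · exact Or.inl (rotation_apply_of_notMem c hcinj hv)
  have hcardrot : (rotation c hcinj).support.card = k := by
    rw [hsupp, Finset.card_image_of_injective _ hcinj, Finset.card_univ, ZMod.card]
  have hfix : ∀ τ : Equiv.Perm V, (∀ v, τ v ≠ v → s(v, τ v) ∈ treeEdges G c) →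
      ∀ i, τ (c i) = c i := by
    intro τ hτ i
    by_contra hne
    exact ((htree _ _).1 (hτ _ hne)).2.1 ⟨i, rfl⟩
  symm
  refine Finset.sum_bij (fun τ _ => rotation c hcinj * τ) ?_ ?_ ?_ ?_
  · intro τ hτ
    simp only [Finset.mem_filter, Finset.mem_univ, true_and] at hτ
    obtain ⟨-, hmem, hcard⟩ := hτ
    have hf := hfix τ hmem
    refine mem_forwardPerms.2 ⟨fun v hv => ?_, ?_, fun i => ?_⟩
    · by_cases hvc : v ∈ Set.range c
      · obtain ⟨i, rfl⟩ := hvc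
        rw [Equiv.Perm.mul_apply, hf, rotation_apply]
        exact (hcadj i).symm
      · by_cases hτv : τ v = v
        · exact absurd (by rw [Equiv.Perm.mul_apply, hτv, rotation_apply_of_notMem c hcinj hvc]) hv
        · obtain ⟨hadj, -, hr⟩ := (htree _ _).1 (hmem v hτv)
          rw [Equiv.Perm.mul_apply, rotation_apply_of_notMem c hcinj hr]
          exact hadj.symm
    · rw [(hdisj τ hf).card_support_mul, hcard, hcardrot]
    · rw [Equiv.Perm.mul_apply, hf, rotation_apply]
  · intro τ₁ _ τ₂ _ h12
    exact mul_left_cancel h12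
  · intro σ hσ
    obtain ⟨hadj, hcard, hrot⟩ := mem_forwardPerms.1 hσ
    have hoff : ∀ v, v ∉ Set.range c → σ v ∉ Set.range c := by
      rintro v hv ⟨i, hi⟩
      have h1 := hrot (i - 1)
      rw [sub_add_cancel, hi] at h1
      exact hv ⟨i - 1, σ.injective h1⟩
    have happ : ∀ v, v ∉ Set.range c → ((rotation c hcinj)⁻¹ * σ) v = σ v := by
      intro v hv
      rw [Equiv.Perm.mul_apply, Equiv.Perm.inv_eq_iff_eq,
        rotation_apply_of_notMem c hcinj (hoff v hv)]
    have hon : ∀ i, ((rotation c hcinj)⁻¹ * σ) (c i) = c i := by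
      intro i
      rw [Equiv.Perm.mul_apply, Equiv.Perm.inv_eq_iff_eq, rotation_apply, hrot]
    have hsplit : rotation c hcinj * ((rotation c hcinj)⁻¹ * σ) = σ := mul_inv_cancel_left _ _
    refine ⟨(rotation c hcinj)⁻¹ * σ, ?_, hsplit⟩
    simp only [Finset.mem_filter, Finset.mem_univ, true_and]
    refine ⟨fun v => ?_, fun v hv => ?_, ?_⟩
    · by_cases hvc : v ∈ Set.range c
      · obtain ⟨i, rfl⟩ := hvc
        rw [hon, hon]
      · rw [happ v hvc, happ _ (hoff v hvc)]
        by_contra hne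
        exact hvc (h.rotates_of_ne hk3 hcinj σ hadj hne).1
    · by_cases hvc : v ∈ Set.range c
      · obtain ⟨i, rfl⟩ := hvc
        exact absurd (hon i) hv
      · rw [happ v hvc] at hv ⊢
        exact (htree _ _).2 ⟨(hadj v hv).symm, hvc, hoff v hvc⟩
    · have h1 := (hdisj _ hon).card_support_mul
      rw [hsplit, hcard, hcardrot] at h1
      omega
  · intro τ hτ
    simp only [Finset.mem_filter, Finset.mem_univ, true_and] at hτ
    obtain ⟨hinv, hmem, hcard⟩ := hτ
    have hd := hdisj τ (hfix τ hmem)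
    rw [hd.support_mul, Finset.prod_union hd.disjoint_support, hsupp,
      prod_inv_degree_cycle hcinj hdegu hdegc, map_mul, sign_rotation c hcinj hkodd,
      sign_of_involutive τ hinv t hcard]
    push_cast
    ring

end Forward

/-- In the cycle-plus-tree setting (`G ∈ 𝒪(k)`, `deg u = 4` for the cycle
vertex `u = c 0` and degree `2` for the other cycle vertices), for every `t ≥ 1` with
`k + 2t ≤ n` one has `ρ_(n-k-2t) = (-1)^(t+1) · 2^(-k) · K_(2t)`. -/
theorem charpoly_coeff_eq_matchSum {V : Type*} [Fintype V] [DecidableEq V] (G : SimpleGraph V)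
    (hconn : G.Connected) (k : ℕ) [NeZero k] (hk3 : 3 ≤ k) (hkodd : Odd k)
    (c : ZMod k → V) (hcinj : Function.Injective c)
    (hcadj : ∀ i : ZMod k, G.Adj (c i) (c (i + 1)))
    (hcard : Fintype.card V = G.edgeFinset.card)
    (hdegu : G.degree (c 0) = 4) (hdegc : ∀ i : ZMod k, i ≠ 0 → G.degree (c i) = 2)
    (t : ℕ) (ht : 1 ≤ t) (htn : k + 2 * t ≤ Fintype.card V) :
    (transition G).charpoly.coeff (Fintype.card V - k - 2 * t) =
      (-1 : ℝ) ^ (t + 1) / 2 ^ k * Km G c t := by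
  obtain ⟨p, d, h⟩ := exists_isParentMap G hconn k hk3 c hcinj hcadj hcard
  have hodd : Odd (k + 2 * t) := hkodd.add_even (even_two_mul t)
  set term : Equiv.Perm V → ℝ := fun σ =>
    ((Equiv.Perm.sign σ : ℤ) : ℝ) * ∏ v ∈ σ.support, (G.degree v : ℝ)⁻¹ with hterm
  have hdisj : Disjoint (forwardPerms G c (k + 2 * t))
      ((forwardPerms G c (k + 2 * t)).map (Equiv.inv _).toEmbedding) := by
    rw [Finset.disjoint_left]
    intro σ h1 h2
    obtain ⟨τ, hτ, rfl⟩ := Finset.mem_map.1 h2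
    have h3 : τ⁻¹ (c (0 + 1)) = c (0 + 1 + 1) := (mem_forwardPerms.1 h1).2.2 (0 + 1)
    have h4 := (mem_forwardPerms.1 hτ).2.2 0
    rw [Equiv.Perm.inv_eq_iff_eq, ← h4] at h3
    exact cycle_add_two_ne hk3 0 (hcinj (τ.injective h3)).symm
  rw [Nat.sub_sub, coeff_charpoly_eq_sum_perm _ (fun i => by simp [transition]) _ htn]
  have hsub : forwardPerms G c (k + 2 * t) ∪
      (forwardPerms G c (k + 2 * t)).map (Equiv.inv _).toEmbedding ⊆
      Finset.univ.filter fun σ : Equiv.Perm V => σ.support.card = k + 2 * t := by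
    intro σ hσ
    rw [Finset.mem_filter]
    refine ⟨Finset.mem_univ _, ?_⟩
    rcases Finset.mem_union.1 hσ with hσ | hσ
    · exact (mem_forwardPerms.1 hσ).2.1
    · obtain ⟨τ, hτ, rfl⟩ := Finset.mem_map.1 hσ
      simpa using (mem_forwardPerms.1 hτ).2.1
  rw [← Finset.sum_subset hsub]
  · have hgood : ∀ σ ∈ forwardPerms G c (k + 2 * t) ∪
        (forwardPerms G c (k + 2 * t)).map (Equiv.inv _).toEmbedding,
        ((Equiv.Perm.sign σ : ℤ) : ℝ) *
          ((-1) ^ (k + 2 * t) * ∏ v ∈ σ.support, transition G (σ v) v) = -term σ := by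
      intro σ hσ
      rw [prod_transition_support, hodd.neg_one_pow, hterm]
      · ring
      rcases Finset.mem_union.1 hσ with hσ | hσ
      · exact (mem_forwardPerms.1 hσ).1
      · obtain ⟨τ, hτ, rfl⟩ := Finset.mem_map.1 hσ
        exact adj_inv_apply (mem_forwardPerms.1 hτ).1
    have hterm_inv : ∀ σ, term σ⁻¹ = term σ := by
      intro σ
      simp only [hterm, Equiv.Perm.sign_inv, Equiv.Perm.support_inv]
    rw [Finset.sum_congr rfl hgood, Finset.sum_union hdisj, Finset.sum_map]
    simp only [Equiv.coe_toEmbedding, Equiv.inv_apply, hterm_inv, Finset.sum_neg_distrib]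
    rw [sum_forwardPerms h hk3 hkodd hcinj hcadj hdegu hdegc]
    ring
  · intro σ hσ hσ'
    have hcardσ := (Finset.mem_filter.1 hσ).2
    by_contra hne
    have hadj := exists_adj_of_prod_ne_zero σ (right_ne_zero_of_mul (right_ne_zero_of_mul hne))
    obtain ⟨v, hv⟩ : ∃ v, σ (σ v) ≠ v := by
      by_contra! hinv
      have h2 := Equiv.Perm.two_dvd_card_support (σ := σ) (by ext v; simp [pow_two, hinv])
      rw [hcardσ] at h2
      exact (Nat.not_even_iff_odd.2 hodd) (even_iff_two_dvd.2 h2)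
    refine hσ' (Finset.mem_union.2 ?_)
    rcases (h.rotates_of_ne hk3 hcinj σ hadj hv).2 with h1 | h1
    · exact Or.inl (mem_forwardPerms.2 ⟨hadj, hcardσ, h1⟩)
    · refine Or.inr (Finset.mem_map.2 ⟨σ⁻¹, mem_forwardPerms.2 ⟨adj_inv_apply hadj, ?_, h1⟩, ?_⟩)
      · simpa using hcardσ
      · simp

end GroverPaper
end

section
/- Let k ≥ 3 be odd and let G ∈ 𝒪(k) have unique cycle vertices u=u_0,u_1,…,u_{k−1} with deg(u)=4 and deg(u_i)=2 for i ≥ 1, and let v_1 and w_1 be the two neighbors of u off the cycle. If G is periodic, then deg(v_1) = deg(w_1) and this common degree is 1 or 2. -/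
open Matrix

attribute [local instance] Classical.propDecidable

namespace GroverPaper

variable {V : Type*}

open Polynomial

/-- The matrix obtained from `M` by replacing all rows and columns outside `S` by zero. -/
noncomputable def corner {R : Type*} [Zero R] (M : Matrix V V R) (S : Set V) : Matrix V V R :=
  Matrix.of fun i j => if i ∈ S ∧ j ∈ S then M i j else 0

lemma corner_apply {R : Type*} [Zero R] (M : Matrix V V R) (S : Set V) (i j : V) :
    corner M S i j = if i ∈ S ∧ j ∈ S then M i j else 0 := rfl

section Det

variable {R : Type*} [CommRing R] [Fintype V] [DecidableEq V]

/-- If the `i`-th row or the `i`-th column of a matrix vanishes off the diagonal, then its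
determinant only depends on the `i`-th diagonal entry and on the complementary minor. -/
lemma det_congr_of_isolated (A B : Matrix V V R) (i : V)
    (hA : (∀ r, r ≠ i → A r i = 0) ∨ (∀ s, s ≠ i → A i s = 0))
    (hB : (∀ r, r ≠ i → B r i = 0) ∨ (∀ s, s ≠ i → B i s = 0))
    (hii : A i i = B i i) (h : ∀ r, r ≠ i → ∀ s, s ≠ i → A r s = B r s) :
    A.det = B.det := by
  have key : ∀ C : Matrix V V R,
      ((∀ r, r ≠ i → C r i = 0) ∨ (∀ s, s ≠ i → C i s = 0)) →
      C.det = (toSquareBlockProp C (· = i)).det * (toSquareBlockProp C fun j => ¬ j = i).det := by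
    rintro C (hC | hC)
    · convert twoBlockTriangular_det C (· = i) fun r hr s hs => hs ▸ hC r hr
    · convert twoBlockTriangular_det' C (· = i) fun r hr s hs => hr ▸ hC s hs
  rw [key A hA, key B hB]
  congr 2
  · ext ⟨a, rfl⟩ ⟨b, rfl⟩
    exact hii
  · ext ⟨a, ha⟩ ⟨b, hb⟩
    exact h a ha b hb

lemma X_mul_det_updateRow_single (M : Matrix V V R) (S : Set V) (i : V) :
    X * ((charmatrix (corner M S)).updateRow i (Pi.single i 1)).det =
      (corner M (S \ {i})).charpoly := by
  rw [← det_updateRow_smul]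
  apply det_congr_of_isolated _ _ i
  · right
    intro s hs
    simp [hs]
  · right
    intro s hs
    simp [charmatrix_apply_ne _ _ _ hs.symm, corner_apply]
  · simp [charmatrix_apply_eq, corner_apply]
  · intro r hr s hs
    simp [charmatrix_apply, corner_apply, hr, hs]

/-- Effect on the characteristic polynomial of adding `1` to a diagonal entry. -/
lemma X_mul_charpoly_corner_add_single (M : Matrix V V R) (S : Set V) (i : V) :
    X * (corner M S + Matrix.single i i 1).charpoly =
      X * (corner M S).charpoly - (corner M (S \ {i})).charpoly := by
  have h : charmatrix (corner M S + Matrix.single i i 1) =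
      (charmatrix (corner M S)).updateRow i
        (charmatrix (corner M S) i + (-1 : R[X]) • Pi.single i 1) := by
    ext1 r s
    by_cases hr : r = i
    · subst hr
      by_cases hs : s = r
      · subst hs
        simp
        ring
      · simp [hs, Ne.symm hs]
    · simp [charmatrix_apply, hr, Ne.symm hr]
  rw [charpoly, h, det_updateRow_add, det_updateRow_smul, updateRow_eq_self, mul_add,
    mul_left_comm, X_mul_det_updateRow_single, charpoly, charpoly]
  ring

/-- The pendant vertex recursion for characteristic polynomials. -/
lemma X_sq_mul_charpoly_corner (M : Matrix V V R) (S : Set V) (i j : V) (hij : i ≠ j)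
    (hi : i ∈ S) (hj : j ∈ S) (hrow : ∀ l ∈ S, l ≠ j → M i l = 0)
    (hcol : ∀ l ∈ S, l ≠ j → M l i = 0) :
    X ^ 2 * (corner M S).charpoly = X ^ 2 * (corner M (S \ {i})).charpoly -
      C (M i j * M j i) * (corner M ((S \ {i}) \ {j})).charpoly := by
  set A := charmatrix (corner M S) with hA
  set B := charmatrix (corner M (S \ {i})) with hB
  have hii : M i i = 0 := hrow i hi hij
  have h1 : (A.updateRow j ((X : R[X]) • A j + C (M j i) • A i)).det = X * A.det := by
    rw [det_updateRow_add, det_updateRow_smul, det_updateRow_smul, updateRow_eq_self,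
      det_updateRow_eq_zero hij]
    ring
  have h2 : (A.updateRow j ((X : R[X]) • A j + C (M j i) • A i)).det =
      (B.updateRow j ((X : R[X]) • B j + (-C (M i j * M j i)) • Pi.single j 1)).det := by
    apply det_congr_of_isolated _ _ i
    · left
      intro r hr
      by_cases hrj : r = j
      · subst hrj
        simp [hA, charmatrix_apply_eq, charmatrix_apply_ne _ _ _ hr, corner_apply, hi, hj, hii]
      · simp only [updateRow_ne hrj, hA, charmatrix_apply_ne _ _ _ hr, corner_apply]
        split_ifs with h
        · simp [hcol r h.1 hrj]
        · simp
    · left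
      intro r hr
      by_cases hrj : r = j
      · subst hrj
        simp [hB, charmatrix_apply_ne _ _ _ hr, corner_apply, hij]
      · simp [updateRow_ne hrj, hB, charmatrix_apply_ne _ _ _ hr, corner_apply]
    · simp [updateRow_ne hij, hA, hB, charmatrix_apply_eq, corner_apply, hii]
    · intro r hr s hs
      by_cases hrj : r = j
      · subst hrj
        by_cases hsr : s = r
        · subst hsr
          simp [hA, hB, charmatrix_apply_eq, charmatrix_apply_ne _ _ _ hij, corner_apply, hi, hj,
            hij.symm]
          ring
        · have : corner M S i s = 0 := by
            rw [corner_apply]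
            split_ifs with h
            · exact hrow s h.2 hsr
            · rfl
          simp [hA, hB, charmatrix_apply_ne _ _ _ (Ne.symm hsr), hsr,
            charmatrix_apply_ne _ _ _ (Ne.symm hs), this]
          simp [corner_apply, hr, hs]
      · simp [updateRow_ne hrj, hA, hB, charmatrix_apply, corner_apply, hr, hs]
  rw [h1, det_updateRow_add, det_updateRow_smul, det_updateRow_smul, updateRow_eq_self] at h2
  have h3 := X_mul_det_updateRow_single M (S \ {i}) j
  rw [← hB] at h3
  rw [charpoly, charpoly, ← h3, ← hA, ← hB, pow_two, mul_assoc, h2]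
  ring

lemma coeff_comp_neg_X (p : R[X]) (i : ℕ) : (p.comp (-X)).coeff i = (-1) ^ i * p.coeff i := by
  rw [show (-X : R[X]) = C (-1) * X by simp, comp_C_mul_X_coeff, mul_comm]

/-- The second elementary symmetric function of the eigenvalues in terms of traces. -/
lemma two_mul_charpoly_coeff [Nontrivial R] (M : Matrix V V R) (hn : 2 ≤ Fintype.card V) :
    2 * M.charpoly.coeff (Fintype.card V - 2) = M.trace ^ 2 - (M * M).trace := by
  have hrev : ∀ N : Matrix V V R, N.charpolyRev.coeff 1 = -N.trace :=
    coeff_charpolyRev_eq_neg_trace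
  have h0 : M.charpolyRev.coeff 0 = 1 := by
    rw [coeff_zero_eq_eval_zero, eval_charpolyRev]
  have h2 : M.charpolyRev.coeff 2 = M.charpoly.coeff (Fintype.card V - 2) := by
    rw [← reverse_charpoly, coeff_reverse, charpoly_natDegree_eq_dim, revAt_le hn]
  have hneg : (-M).charpolyRev = M.charpolyRev.comp (-X) := by
    rw [charpolyRev, charpolyRev, ← coe_compRingHom_apply, RingHom.map_det]
    congr 1
    ext1 r s
    by_cases h : r = s <;> simp [h]
  have hsq : M.charpolyRev * (-M).charpolyRev = (M * M).charpolyRev.comp (X ^ 2) := by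
    rw [charpolyRev, charpolyRev, charpolyRev, ← coe_compRingHom_apply, RingHom.map_det,
      ← det_mul]
    congr 1
    have hmap : (-M).map (C : R → R[X]) = -M.map C := by ext1 r s; simp
    have : (1 - (X : R[X]) • M.map C) * (1 - (X : R[X]) • (-M).map C) =
        1 - (X ^ 2 : R[X]) • (M * M).map C := by
      rw [hmap, Matrix.map_mul]
      simp only [mul_sub, sub_mul, smul_neg, mul_one, one_mul, Matrix.smul_mul, Matrix.mul_smul,
        mul_neg, smul_smul, pow_two]
      abel
    rw [this]
    ext1 r s
    by_cases h : r = s <;> simp [h, -Matrix.map_mul]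
  have h := congr_arg (coeff · 2) hsq
  simp only [hneg, coeff_mul] at h
  have hexp : ((M * M).charpolyRev.comp (X ^ 2)).coeff 2 = -(M * M).trace := by
    rw [← expand_eq_comp_X_pow, coeff_expand (by norm_num)]
    simp [hrev]
  have hc : ∀ i, (M.charpolyRev.comp (-X)).coeff i = (-1) ^ i * M.charpolyRev.coeff i := by
    exact coeff_comp_neg_X _
  rw [hexp, Finset.Nat.antidiagonal_succ] at h
  simp [Finset.Nat.antidiagonal_succ, hc, h0, h2, hrev] at h
  linear_combination h

/-- If the nonzero entries of `M` only join vertices of opposite sign, then the characteristic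
polynomial of `M` has the parity of its degree. -/
lemma charpoly_coeff_eq_zero_of_sign (M : Matrix V V ℂ) (s : V → ℂ)
    (hs : ∀ v, s v * s v = 1) (hM : ∀ v w, M v w ≠ 0 → s v = - s w) (i : ℕ)
    (hi : ¬ (Fintype.card V + i) % 2 = 0) : M.charpoly.coeff i = 0 := by
  have hD : diagonal s * diagonal s = 1 := by simp [hs]
  have hconj : diagonal s * M * diagonal s = -M := by
    ext v w
    rw [mul_diagonal, diagonal_mul, neg_apply]
    by_cases h : M v w = 0
    · simp [h]
    · rw [hM v w h]
      linear_combination (- M v w) * hs w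
  have h1 : (-M).charpoly = M.charpoly := by
    rw [← hconj, charpoly_mul_comm, ← mul_assoc, hD, one_mul]
  have h2 : (-M).charpoly = (-1) ^ Fintype.card V * M.charpoly.comp (-X) := by
    rw [charpoly, charpoly, ← coe_compRingHom_apply, RingHom.map_det, ← det_neg]
    congr 1
    ext1 r s
    by_cases h : r = s <;> simp [h, add_comm]
  have h3 := congr_arg (coeff · i) (h1.symm.trans h2)
  have hodd : Odd (Fintype.card V + i) := Nat.odd_iff.2 (by omega)
  have hc : ((-1) ^ Fintype.card V * M.charpoly.comp (-X)).coeff i =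
      (-1) ^ (Fintype.card V + i) * M.charpoly.coeff i := by
    have : ((-1) ^ Fintype.card V : ℂ[X]) = C ((-1) ^ Fintype.card V) := by simp
    rw [this, coeff_C_mul, coeff_comp_neg_X, pow_add]
    ring
  rw [hc, hodd.neg_one_pow] at h3
  linear_combination h3 / 2

lemma isIntegral_charpoly_coeff (M : Matrix V V ℂ)
    (h : ∀ (f : V → ℂ) (μ : ℂ), f ≠ 0 → M *ᵥ f = μ • f → IsIntegral ℤ μ) (i : ℕ) :
    IsIntegral ℤ (M.charpoly.coeff i) := by
  refine isIntegral_coeff_of_factors _ ?_ (IsAlgClosed.splits _) ?_ i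
  · rw [(charpoly_monic M).leadingCoeff]
    exact isIntegral_one
  intro r hr
  rw [IsRoot, eval_charpoly] at hr
  obtain ⟨f, hf, hf0⟩ := exists_mulVec_eq_zero_iff.2 hr
  refine h f r hf ?_
  rw [sub_mulVec, sub_eq_zero] at hf0
  rw [← hf0, scalar_apply]
  ext v
  simp [mulVec_diagonal]

end Det

section Grover

variable [Fintype V] (G : SimpleGraph V)

/-- Twice the transition matrix of the isotropic random walk, with complex entries. -/
noncomputable def doubledTransition : Matrix V V ℂ :=
  Matrix.of fun v w => if G.Adj v w then 2 / (G.degree v : ℂ) else 0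

lemma doubledTransition_apply (v w : V) :
    doubledTransition G v w = if G.Adj v w then 2 / (G.degree v : ℂ) else 0 := rfl

lemma groverU_mulVec_s12 (φ : V × V → ℂ) (e : Arc G) :
    (groverU G *ᵥ fun f => φ f.val) e =
      2 / (G.degree e.val.1 : ℂ) * (∑ w, if G.Adj e.val.1 w then φ (w, e.val.1) else 0) -
        φ (e.val.2, e.val.1) := by
  obtain ⟨⟨v, w⟩, hvw⟩ := e
  have hsplit : ∀ f : Arc G, groverU G ⟨(v, w), hvw⟩ f * φ f.val =
      (if f.val.2 = v then 2 / (G.degree v : ℂ) * φ f.val else 0) -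
        (if f = ⟨(w, v), hvw.symm⟩ then φ (w, v) else 0) := by
    rintro ⟨⟨a, b⟩, hab⟩
    by_cases hb : b = v
    · subst hb
      by_cases ha : a = w
      · subst ha
        simp [groverU]
        ring
      · simp [groverU, ha, Ne.symm ha]
    · simp [groverU, hb]
  simp only [mulVec, dotProduct]
  rw [Finset.sum_congr rfl fun f _ => hsplit f, Finset.sum_sub_distrib, Finset.sum_ite_eq']
  simp only [Finset.mem_univ, if_true]
  congr 1
  rw [← Finset.sum_subtype (Finset.univ.filter fun p : V × V => G.Adj p.1 p.2) (by simp)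
    (fun p : V × V => if p.2 = v then 2 / (G.degree v : ℂ) * φ p else 0), Finset.sum_filter,
    Fintype.sum_prod_type, Finset.mul_sum]
  refine Finset.sum_congr rfl fun x _ => ?_
  rw [Finset.sum_eq_single v (fun y _ hy => by simp [hy]) (by simp)]
  simp [G.adj_comm x v]

/-- The eigenvalues of twice the transition matrix of a periodic graph are algebraic integers. -/
lemma IsPeriodic.isIntegral_of_doubledTransition_mulVec {G : SimpleGraph V} (hG : IsPeriodic G)
    (hpos : ∀ v, 0 < G.degree v) (f : V → ℂ) (μ : ℂ) (hf : f ≠ 0)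
    (h : doubledTransition G *ᵥ f = μ • f) : IsIntegral ℤ μ := by
  obtain ⟨N, hN, hU⟩ := hG
  have hd : ∀ v, (G.degree v : ℂ) ≠ 0 := fun v => by exact_mod_cast (hpos v).ne'
  set a : Arc G → ℂ := fun e => f e.val.1 with ha
  set b : Arc G → ℂ := fun e => f e.val.2 with hb
  have hUb : groverU G *ᵥ b = a := by
    ext e
    rw [hb, groverU_mulVec_s12 G (fun p => f p.2) e]
    have : (∑ w, if G.Adj e.val.1 w then f e.val.1 else 0) = G.degree e.val.1 * f e.val.1 := by
      rw [← Finset.sum_filter, Finset.sum_const, nsmul_eq_mul,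
        ← SimpleGraph.neighborFinset_eq_filter, SimpleGraph.card_neighborFinset_eq_degree]
    rw [this, ha]
    field_simp [hd e.val.1]
    ring
  have hUa : groverU G *ᵥ a = μ • a - b := by
    ext e
    rw [ha, groverU_mulVec_s12 G (fun p => f p.1) e]
    have := congr_fun h e.val.1
    simp only [mulVec, dotProduct, doubledTransition_apply, Pi.smul_apply] at this
    rw [Pi.sub_apply, Pi.smul_apply, ← this, Finset.mul_sum]
    congr 1
    refine Finset.sum_congr rfl fun w _ => ?_
    split_ifs <;> simp
  have hb0 : b ≠ 0 := by
    intro hb0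
    apply hf
    ext v
    obtain ⟨w, hw⟩ := (G.degree_pos_iff_exists_adj v).1 (hpos v)
    exact congr_fun hb0 ⟨(w, v), hw.symm⟩
  obtain ⟨ζ, hζ⟩ : ∃ ζ : ℂ, ζ * ζ - μ * ζ + 1 = 0 := by
    obtain ⟨d, hd⟩ := IsAlgClosed.exists_pow_nat_eq (μ ^ 2 - 4) (n := 2) (by norm_num)
    exact ⟨(μ + d) / 2, by linear_combination hd / 4⟩
  have hζ0 : ζ ≠ 0 := by
    rintro rfl
    simp at hζ
  have hμ : μ = ζ + ζ⁻¹ := by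
    field_simp
    linear_combination -hζ
  have hpow : ∀ (g : Arc G → ℂ) (z : ℂ), g ≠ 0 → groverU G *ᵥ g = z • g → z ^ N = 1 := by
    intro g z hg hz
    have hn : ∀ n : ℕ, groverU G ^ n *ᵥ g = z ^ n • g := by
      intro n
      induction n with
      | zero => simp
      | succ n ih => rw [pow_succ, ← mulVec_mulVec, hz, mulVec_smul, ih, smul_smul, pow_succ']
    have := hn N
    rw [hU, one_mulVec] at this
    obtain ⟨e, he⟩ := Function.ne_iff.1 hg
    have h1 := congr_fun this e
    simp only [Pi.smul_apply, smul_eq_mul] at h1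
    exact mul_right_cancel₀ he (by rw [one_mul, ← h1])
  have hroot : ζ ^ N = 1 := by
    by_cases h0 : a - ζ • b = 0
    · refine hpow b ζ hb0 ?_
      rw [hUb, sub_eq_zero.1 h0]
    · have : ζ⁻¹ ^ N = 1 := by
        refine hpow (a - ζ • b) _ h0 ?_
        rw [mulVec_sub, mulVec_smul, hUb, hUa]
        ext e
        simp only [Pi.sub_apply, Pi.smul_apply, smul_eq_mul, hμ]
        field_simp
        ring
      rwa [inv_pow, inv_eq_one] at this
  have hint : ∀ z : ℂ, z ^ N = 1 → IsIntegral ℤ z := fun z hz =>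
    IsIntegral.of_pow hN (hz ▸ isIntegral_one)
  rw [hμ]
  exact (hint ζ hroot).add (hint ζ⁻¹ (by rw [inv_pow, hroot, inv_one]))

end Grover

/-- Effect of deleting an index on the trace of the square. -/
lemma trace_corner_mul_corner {V R : Type*} [Fintype V] [CommRing R] (M : Matrix V V R)
    (S : Set V) (a : V) (ha : M a a = 0) :
    (corner M S * corner M S).trace =
      (corner M (S \ {a}) * corner M (S \ {a})).trace +
        2 * ∑ y, corner M S a y * corner M S y a := by
  set K := corner M S with hK
  have hterm : ∀ x y, K x y * K y x =
      corner M (S \ {a}) x y * corner M (S \ {a}) y x +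
        (if x = a then K a y * K y a else 0) + (if y = a then K a x * K x a else 0) := by
    intro x y
    by_cases hx : x = a <;> by_cases hy : y = a
    · simp [hK, hx, hy, corner_apply, ha]
    · simp [hx, hy, corner_apply]
    · simp [hx, hy, corner_apply, mul_comm]
    · simp [hK, hx, hy, corner_apply]
  simp only [trace, diag_apply, mul_apply]
  rw [Finset.sum_congr rfl fun x _ => Finset.sum_congr rfl fun y _ => hterm x y]
  simp only [Finset.sum_add_distrib, Finset.sum_ite_eq', Finset.mem_univ, if_true]
  have : ∀ x, (∑ y, if x = a then K a y * K y a else 0) =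
      if x = a then ∑ y, K a y * K y a else 0 := fun x => by split_ifs <;> simp
  simp only [this, Finset.sum_ite_eq', Finset.mem_univ, if_true]
  ring

section Loop

/-- A cycle `p 0, …, p (2 * m)` of odd length, all of whose vertices have degree two except for
`p 0`, which has exactly two further neighbors `v` and `w`. -/
structure IsPendantOddCycle [Fintype V] (G : SimpleGraph V) (m : ℕ) (p : ℕ → V) (v w : V) :
    Prop where
  pos : 0 < m
  inj : ∀ i j, i ≤ 2 * m → j ≤ 2 * m → p i = p j → i = j
  closed : p (2 * m + 1) = p 0
  adj_zero : ∀ x, G.Adj (p 0) x ↔ x = p 1 ∨ x = p (2 * m) ∨ x = v ∨ x = w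
  adj_succ : ∀ i < 2 * m, ∀ x, G.Adj (p (i + 1)) x ↔ x = p i ∨ x = p (i + 2)
  degree_zero : G.degree (p 0) = 4
  degree_succ : ∀ i < 2 * m, G.degree (p (i + 1)) = 2
  left_ne : ∀ i ≤ 2 * m, v ≠ p i
  right_ne : ∀ i ≤ 2 * m, w ≠ p i
  left_ne_right : v ≠ w

/-- The complement of the vertices `p (j + 1), …, p (2 * m)`. -/
def stem (m : ℕ) (p : ℕ → V) (j : ℕ) : Set V := {x | ∀ i, j < i → i ≤ 2 * m → x ≠ p i}

lemma stem_mono (m : ℕ) (p : ℕ → V) {i j : ℕ} (h : i ≤ j) : stem m p i ⊆ stem m p j :=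
  fun _ hx l hl hl' => hx l (h.trans_lt hl) hl'

lemma notMem_stem (m : ℕ) (p : ℕ → V) {i j : ℕ} (hj : j < i) (hi : i ≤ 2 * m) :
    p i ∉ stem m p j :=
  fun hx => hx i hj hi rfl

lemma mem_stem_or (m : ℕ) (p : ℕ → V) (x : V) : x ∈ stem m p m ∨ ∃ i < m, x = p (2 * m - i) := by
  by_contra! hx
  refine hx.1 fun i hi hi' => ?_
  have := hx.2 (2 * m - i) (by omega)
  rwa [show 2 * m - (2 * m - i) = i by omega] at this

lemma stem_succ_sdiff (m : ℕ) (p : ℕ → V) {j : ℕ} (hj : j < 2 * m) :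
    stem m p (j + 1) \ {p (j + 1)} = stem m p j := by
  ext x
  constructor
  · rintro ⟨hx, hx'⟩ i hi hi'
    rcases Nat.lt_or_ge (j + 1) i with h | h
    · exact hx i h hi'
    · obtain rfl : i = j + 1 := by omega
      exact hx'
  · exact fun hx => ⟨stem_mono m p j.le_succ hx, hx _ j.lt_succ_self hj⟩

/-- The reflection of the cycle, restricted to fold `p (2 * m - i)` onto `p (i + 1)`. -/
noncomputable def fold (m : ℕ) (p : ℕ → V) (x : V) : V :=
  if hx : ∃ i < m, x = p (2 * m - i) then p (hx.choose + 1) else x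

lemma fold_of_mem {m : ℕ} {p : ℕ → V} {x : V} (hx : x ∈ stem m p m) : fold m p x = x :=
  dif_neg fun ⟨i, hi, e⟩ => hx (2 * m - i) (by omega) (by omega) e

/-- The weights of the quotient of the doubled transition matrix by the reflection of the cycle,
without the loop at `p m`. -/
noncomputable def foldedWeights [Fintype V] (G : SimpleGraph V) (p : ℕ → V) : Matrix V V ℂ :=
  Matrix.of fun x y => doubledTransition G x y + if x = p 0 ∧ y = p 1 then 1 / 2 else 0

lemma foldedWeights_apply [Fintype V] (G : SimpleGraph V) (p : ℕ → V) (x y : V) :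
    foldedWeights G p x y =
      doubledTransition G x y + if x = p 0 ∧ y = p 1 then 1 / 2 else 0 := rfl

variable [Fintype V] {G : SimpleGraph V} {m : ℕ} {p : ℕ → V} {v w : V}

namespace IsPendantOddCycle

lemma ne (h : IsPendantOddCycle G m p v w)
    {i j : ℕ} (hi : i ≤ 2 * m) (hj : j ≤ 2 * m) (hij : i ≠ j) : p i ≠ p j :=
  fun e => hij (h.inj i j hi hj e)

lemma mem_stem (h : IsPendantOddCycle G m p v w)
    {i j : ℕ} (hij : i ≤ j) (hj : j ≤ 2 * m) : p i ∈ stem m p j :=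
  fun _ hl hl' => h.ne (hij.trans hj) hl' (by omega)

lemma adj_zero_one (h : IsPendantOddCycle G m p v w) : G.Adj (p 0) (p 1) :=
  (h.adj_zero _).2 (Or.inl rfl)

lemma foldedWeights_eq_zero (h : IsPendantOddCycle G m p v w)
    {x y : V} (hxy : ¬ G.Adj x y) : foldedWeights G p x y = 0 := by
  have : ¬ (x = p 0 ∧ y = p 1) := by
    rintro ⟨rfl, rfl⟩
    exact hxy h.adj_zero_one
  simp [foldedWeights_apply, doubledTransition_apply, hxy, this]

lemma foldedWeights_succ_left (h : IsPendantOddCycle G m p v w) {j : ℕ} (hj : j < 2 * m) :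
    foldedWeights G p (p (j + 1)) (p j) = 1 := by
  have h1 : p (j + 1) ≠ p 0 := h.ne hj (by omega) (by omega)
  have h2 : G.Adj (p (j + 1)) (p j) := (h.adj_succ j hj _).2 (Or.inl rfl)
  simp [foldedWeights_apply, doubledTransition_apply, h1, h2, h.degree_succ j hj]

lemma foldedWeights_succ_right (h : IsPendantOddCycle G m p v w) {j : ℕ} (hj : j < 2 * m) :
    foldedWeights G p (p j) (p (j + 1)) = 1 := by
  have h2 : G.Adj (p j) (p (j + 1)) := ((h.adj_succ j hj _).2 (Or.inl rfl)).symm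
  rcases j with _ | j
  · have h3 : G.Adj (p 0) (p 1) := h2
    simp [foldedWeights_apply, doubledTransition_apply, h3, h.degree_zero]
    norm_num
  · have h1 : p (j + 1) ≠ p 0 := h.ne (by omega) (by omega) (by omega)
    simp [foldedWeights_apply, doubledTransition_apply, h1, h2, h.degree_succ j (by omega)]

lemma X_sq_mul_charpoly_stem (h : IsPendantOddCycle G m p v w) {j : ℕ} (hj : j < m) :
    X ^ 2 * (corner (foldedWeights G p) (stem m p (j + 1))).charpoly =
      X ^ 2 * (corner (foldedWeights G p) (stem m p j)).charpoly -
        (corner (foldedWeights G p) (stem m p j \ {p j})).charpoly := by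
  have hj2 : j < 2 * m := by omega
  have key : ∀ l ∈ stem m p (j + 1), l ≠ p j → ¬ G.Adj (p (j + 1)) l := by
    intro l hl hlj hadj
    rcases (h.adj_succ j hj2 l).1 hadj with rfl | rfl
    · exact hlj rfl
    · exact hl (j + 2) (by omega) (by omega) rfl
  have := X_sq_mul_charpoly_corner (foldedWeights G p) (stem m p (j + 1)) (p (j + 1)) (p j)
    (h.ne hj2 hj2.le (by omega)) (h.mem_stem le_rfl hj2)
    (h.mem_stem j.le_succ hj2)
    (fun l hl hlj => h.foldedWeights_eq_zero (key l hl hlj))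
    (fun l hl hlj => h.foldedWeights_eq_zero fun hadj => key l hl hlj hadj.symm)
  rwa [stem_succ_sdiff m p hj2, h.foldedWeights_succ_left hj2, h.foldedWeights_succ_right hj2,
    mul_one, C_1, one_mul] at this

lemma reachable_deleteEdges (h : IsPendantOddCycle G m p v w) :
    (G.deleteEdges {s(p m, p (m + 1))}).Reachable (p m) (p (m + 1)) := by
  have hstep : ∀ i, i < 2 * m + 1 → i ≠ m →
      (G.deleteEdges {s(p m, p (m + 1))}).Adj (p i) (p (i + 1)) := by
    intro i hi him
    rw [SimpleGraph.deleteEdges_adj]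
    have hp := h.pos
    constructor
    · rcases Nat.lt_or_ge i (2 * m) with hi' | hi'
      · exact ((h.adj_succ i hi' _).2 (Or.inl rfl)).symm
      · obtain rfl : i = 2 * m := by omega
        rw [h.closed]
        exact ((h.adj_zero _).2 (by simp)).symm
    · intro he
      rw [Set.mem_singleton_iff, Sym2.eq_iff] at he
      rcases he with ⟨he, -⟩ | ⟨h1, h2⟩
      · exact him (h.inj _ _ (by omega) (by omega) he)
      · have hi' : i = m + 1 := h.inj _ _ (by omega) (by omega) h1
        subst hi'
        rcases Nat.lt_or_ge (m + 1) (2 * m) with hm | hm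
        · exact h.ne (by omega) (by omega) (by omega) h2
        · have : m + 1 + 1 = 2 * m + 1 := by omega
          rw [this, h.closed] at h2
          exact h.ne (by omega) (by omega) (by omega) h2
  have h1 : ∀ i ≤ m, (G.deleteEdges {s(p m, p (m + 1))}).Reachable (p 0) (p i) := by
    intro i
    induction i with
    | zero => exact fun _ => .rfl
    | succ i ih => exact fun hi =>
        (ih (by omega)).trans (hstep i (by omega) (by omega)).reachable
  have h2 : ∀ i ≤ m,
      (G.deleteEdges {s(p m, p (m + 1))}).Reachable (p (m + 1)) (p (m + 1 + i)) := by
    intro i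
    induction i with
    | zero => exact fun _ => .rfl
    | succ i ih => exact fun hi =>
        (ih (by omega)).trans (hstep (m + 1 + i) (by omega) (by omega)).reachable
  have h3 := h2 m le_rfl
  rw [show m + 1 + m = 2 * m + 1 by omega, h.closed] at h3
  exact (h1 m le_rfl).symm.trans h3.symm

lemma adj_mid (h : IsPendantOddCycle G m p v w) : G.Adj (p m) (p (m + 1)) :=
  have := h.pos
  ((h.adj_succ m (by omega) _).2 (Or.inl rfl)).symm

lemma isTree_deleteEdges (h : IsPendantOddCycle G m p v w)
    (hconn : G.Connected) (hcard : Fintype.card V = G.edgeFinset.card) :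
    (G.deleteEdges {s(p m, p (m + 1))}).IsTree := by
  rw [SimpleGraph.isTree_iff_connected_and_card]
  constructor
  · exact hconn.connected_delete_edge_of_not_isBridge fun hb => hb h.reachable_deleteEdges
  · rw [Nat.card_eq_fintype_card (α := V), hcard, Nat.card_eq_fintype_card,
      ← SimpleGraph.edgeFinset_card]
    have hmem : s(p m, p (m + 1)) ∈ G.edgeFinset := by simpa using h.adj_mid
    rw [← Finset.card_erase_add_one hmem]
    congr 2
    ext e
    simp [SimpleGraph.edgeSet_deleteEdges, and_comm]

lemma exists_sign (h : IsPendantOddCycle G m p v w)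
    (hconn : G.Connected) (hcard : Fintype.card V = G.edgeFinset.card) :
    ∃ s : V → ℂ, (∀ x, s x * s x = 1) ∧
      ∀ x ∈ stem m p m, ∀ y ∈ stem m p m, foldedWeights G p x y ≠ 0 → s x = - s y := by
  obtain ⟨col⟩ := (h.isTree_deleteEdges hconn hcard).isAcyclic.isBipartite
  have hp := h.pos
  have hnot : p (m + 1) ∉ stem m p m := notMem_stem m p (by omega) (by omega)
  refine ⟨fun x => if col x = 0 then 1 else -1, fun x => by dsimp only; split_ifs <;> norm_num, ?_⟩
  intro x hx y hy hxy
  have hadj : G.Adj x y := by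
    by_contra hadj
    exact hxy (h.foldedWeights_eq_zero hadj)
  have hadj' : (G.deleteEdges {s(p m, p (m + 1))}).Adj x y := by
    rw [SimpleGraph.deleteEdges_adj]
    refine ⟨hadj, fun he => ?_⟩
    rw [Set.mem_singleton_iff, Sym2.eq_iff] at he
    rcases he with ⟨-, rfl⟩ | ⟨rfl, -⟩
    · exact hnot hy
    · exact hnot hx
  have hne := col.valid hadj'
  dsimp only
  generalize col x = a at hne ⊢
  generalize col y = b at hne ⊢
  fin_cases a <;> fin_cases b <;> simp_all

lemma charpoly_coeff_eq_zero (h : IsPendantOddCycle G m p v w)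
    (hconn : G.Connected) (hcard : Fintype.card V = G.edgeFinset.card)
    {S : Set V} (hS : S ⊆ stem m p m) {i : ℕ} (hi : ¬ (Fintype.card V + i) % 2 = 0) :
    (corner (foldedWeights G p) S).charpoly.coeff i = 0 := by
  obtain ⟨s, hs, hs'⟩ := h.exists_sign hconn hcard
  refine charpoly_coeff_eq_zero_of_sign _ s hs (fun x y hxy => ?_) i hi
  rw [corner_apply] at hxy
  split_ifs at hxy with hmem
  · exact hs' x (hS hmem.1) y (hS hmem.2) hxy
  · exact absurd rfl hxy

lemma doubledTransition_mulVec_zero (h : IsPendantOddCycle G m p v w) (f : V → ℂ) :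
    (doubledTransition G *ᵥ f) (p 0) = (f (p 1) + f (p (2 * m)) + f v + f w) / 2 := by
  have hp := h.pos
  have hset : (Finset.univ.filter fun x => G.Adj (p 0) x) = {p 1, p (2 * m), v, w} := by
    ext x
    simp [h.adj_zero]
  have h1 : p 1 ≠ p (2 * m) := h.ne (by omega) (by omega) (by omega)
  have h2 := h.left_ne 1 (by omega)
  have h3 := h.right_ne 1 (by omega)
  have h4 := h.left_ne (2 * m) le_rfl
  have h5 := h.right_ne (2 * m) le_rfl
  simp only [mulVec, dotProduct, doubledTransition_apply, ite_mul, zero_mul]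
  rw [← Finset.sum_filter, hset, Finset.sum_insert (by simp [h1, h2.symm, h3.symm]),
    Finset.sum_insert (by simp [h4.symm, h5.symm]), Finset.sum_pair h.left_ne_right,
    h.degree_zero]
  push_cast
  ring

lemma doubledTransition_mulVec_succ (h : IsPendantOddCycle G m p v w)
    (f : V → ℂ) {i : ℕ} (hi : i < 2 * m) :
    (doubledTransition G *ᵥ f) (p (i + 1)) = f (p i) + f (p (i + 2)) := by
  have hset : (Finset.univ.filter fun x => G.Adj (p (i + 1)) x) = {p i, p (i + 2)} := by
    ext x
    simp [h.adj_succ i hi]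
  have h1 : p i ≠ p (i + 2) := by
    rcases Nat.lt_or_ge (i + 1) (2 * m) with hi' | hi'
    · exact h.ne hi.le hi' (by omega)
    · rw [show i + 2 = 2 * m + 1 by omega, h.closed]
      exact h.ne hi.le (by omega) (by omega)
  simp only [mulVec, dotProduct, doubledTransition_apply, ite_mul, zero_mul]
  rw [← Finset.sum_filter, hset, Finset.sum_pair h1, h.degree_succ i hi]
  push_cast
  ring

lemma fold_sub (h : IsPendantOddCycle G m p v w)
    {i : ℕ} (hi : i < m) : fold m p (p (2 * m - i)) = p (i + 1) := by
  have hx : ∃ j < m, p (2 * m - i) = p (2 * m - j) := ⟨i, hi, rfl⟩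
  rw [fold, dif_pos hx]
  have h1 := hx.choose_spec.1
  have := h.inj _ _ (by omega) (by omega) hx.choose_spec.2
  congr 2
  omega

lemma fold_symm (h : IsPendantOddCycle G m p v w) {i : ℕ} (hi : i ≤ 2 * m + 1) :
    fold m p (p (2 * m + 1 - i)) = fold m p (p i) := by
  have hlow : ∀ j, 0 < j → j ≤ m → fold m p (p (2 * m + 1 - j)) = fold m p (p j) := by
    intro j hj hjm
    rw [fold_of_mem (h.mem_stem hjm (by omega)), show 2 * m + 1 - j = 2 * m - (j - 1) by omega,
      h.fold_sub (by omega), Nat.sub_add_cancel hj]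
  rcases Nat.eq_zero_or_pos i with rfl | hi0
  · rw [Nat.sub_zero, h.closed]
  rcases Nat.lt_or_ge m i with him | him
  · rcases Nat.eq_or_lt_of_le hi with rfl | hi'
    · rw [Nat.sub_self, h.closed]
    · have := hlow (2 * m + 1 - i) (by omega) (by omega)
      rw [← this]
      congr 2
      omega
  · exact hlow i hi0 him

lemma eq_zero_of_notMem_stem (h : IsPendantOddCycle G m p v w) (f : V → ℂ) (μ : ℂ) (hμ : μ ≠ 0)
    (hf : (corner (foldedWeights G p) (stem m p m) + Matrix.single (p m) (p m) 1) *ᵥ f = μ • f)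
    {x : V} (hx : x ∉ stem m p m) : f x = 0 := by
  have hxm : x ≠ p m := fun e => hx (e ▸ h.mem_stem le_rfl (by omega))
  have := congr_fun hf x
  rw [add_mulVec, Pi.add_apply, single_mulVec, Function.update_of_ne hxm] at this
  simp only [mulVec, dotProduct, corner_apply, hx, false_and, if_false, zero_mul,
    Finset.sum_const_zero, Pi.zero_apply, add_zero, Pi.smul_apply, smul_eq_mul] at this
  exact (mul_eq_zero.1 this.symm).resolve_left hμ

/-- Eigenvectors of the folded matrix unfold to eigenvectors of the doubled transition matrix. -/
lemma doubledTransition_mulVec_fold (h : IsPendantOddCycle G m p v w)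
    (f : V → ℂ) (μ : ℂ) (hμ : μ ≠ 0)
    (hf : (corner (foldedWeights G p) (stem m p m) + Matrix.single (p m) (p m) 1) *ᵥ f = μ • f) :
    (doubledTransition G *ᵥ fun x => f (fold m p x)) = μ • fun x => f (fold m p x) := by
  have hp := h.pos
  have h0m : p 0 ≠ p m := h.ne (by omega) (by omega) (by omega)
  have hzero := fun x => h.eq_zero_of_notMem_stem f μ hμ hf (x := x)
  have heq : ∀ x ∈ stem m p m, (doubledTransition G *ᵥ f) x +
      (if x = p 0 then f (p 1) / 2 else 0) + (if x = p m then f (p m) else 0) = μ * f x := by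
    intro x hx
    have := congr_fun hf x
    rw [add_mulVec, Pi.add_apply, single_mulVec, Function.update_apply] at this
    simp only [Pi.smul_apply, smul_eq_mul, one_mul, Pi.zero_apply] at this
    rw [← this]
    congr 1
    simp only [mulVec, dotProduct]
    have hterm : ∀ y, corner (foldedWeights G p) (stem m p m) x y * f y =
        doubledTransition G x y * f y +
          if y = p 1 then (if x = p 0 then f (p 1) / 2 else 0) else 0 := by
      intro y
      by_cases hy : y ∈ stem m p m
      · rw [corner_apply, if_pos ⟨hx, hy⟩, foldedWeights_apply, add_mul]
        congr 1
        by_cases hy1 : y = p 1 <;> by_cases hx0 : x = p 0 <;> simp [hy1, hx0]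
        ring
      · have : y ≠ p 1 := fun e => hy (e ▸ h.mem_stem (by omega) (by omega))
        simp [hzero y hy, this]
    rw [Finset.sum_congr rfl fun y _ => hterm y, Finset.sum_add_distrib]
    simp
  have hpath : ∀ i ≤ m, fold m p (p i) = p i := fun i hi =>
    fold_of_mem (h.mem_stem hi (by omega))
  have hstep : ∀ j < m, μ * f (p (j + 1)) =
      f (fold m p (p j)) + f (fold m p (p (j + 2))) := by
    intro j hj
    rw [← heq _ (h.mem_stem hj (by omega)), h.doubledTransition_mulVec_succ f (by omega),
      if_neg (h.ne (by omega) (by omega) (by omega)), hpath j hj.le]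
    rcases Nat.eq_or_lt_of_le (Nat.succ_le_of_lt hj) with hjm | hjm
    · have h1 : p (j + 1) = p m := by rw [← hjm]
      have h2 : f (p (j + 2)) = 0 := hzero _ (notMem_stem m p (by omega) (by omega))
      have h3 : fold m p (p (j + 2)) = p m := by
        have := h.fold_symm (i := m) (by omega)
        rw [hpath m le_rfl] at this
        rw [← this]
        congr 2
        omega
      rw [if_pos h1, h2, h3]
      ring
    · rw [if_neg (h.ne (by omega) (by omega) (by omega)), hpath (j + 2) (by omega)]
      ring
  ext x
  rw [Pi.smul_apply, smul_eq_mul]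
  rcases mem_stem_or m p x with hx | ⟨i, hi, rfl⟩
  · rw [fold_of_mem hx]
    by_cases hx0 : x = p 0
    · subst hx0
      have hv : v ∈ stem m p m := fun i _ hi => h.left_ne i hi
      have hw : w ∈ stem m p m := fun i _ hi => h.right_ne i hi
      rw [← heq _ hx, h.doubledTransition_mulVec_zero, h.doubledTransition_mulVec_zero,
        if_pos rfl, if_neg h0m, fold_of_mem hv, fold_of_mem hw, hpath 1 hp,
        hzero (p (2 * m)) (notMem_stem m p (by omega) le_rfl)]
      have := h.fold_sub hp
      rw [Nat.sub_zero, zero_add] at this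
      rw [this]
      ring
    by_cases hxp : ∃ j < m, x = p (j + 1)
    · obtain ⟨j, hj, rfl⟩ := hxp
      rw [h.doubledTransition_mulVec_succ _ (by omega), hstep j hj]
    · have hxm : x ≠ p m := fun e => hxp ⟨m - 1, by omega, by rw [e]; congr 1; omega⟩
      rw [← heq x hx, if_neg hx0, if_neg hxm, add_zero, add_zero]
      simp only [mulVec, dotProduct]
      refine Finset.sum_congr rfl fun y _ => ?_
      by_cases hadj : G.Adj x y
      · rcases mem_stem_or m p y with hy | ⟨i, hi, rfl⟩
        · rw [fold_of_mem hy]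
        · exfalso
          have := (h.adj_succ (2 * m - i - 1) (by omega) x).1
          rw [show 2 * m - i - 1 + 1 = 2 * m - i by omega] at this
          rcases this hadj.symm with rfl | rfl
          · rcases Nat.lt_or_ge (i + 1) m with hi' | hi'
            · exact notMem_stem m p (by omega) (by omega) hx
            · exact hxm (congr_arg p (by omega))
          · rcases Nat.eq_zero_or_pos i with rfl | hi'
            · apply hx0
              rw [← h.closed]
              exact congr_arg p (by omega)
            · exact notMem_stem m p (by omega) (by omega) hx
      · simp [doubledTransition_apply, hadj]
  · have h1 := h.doubledTransition_mulVec_succ (fun x => f (fold m p x))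
      (i := 2 * m - i - 1) (by omega)
    rw [show 2 * m - i - 1 + 1 = 2 * m - i by omega] at h1
    rw [h1, h.fold_sub hi, hstep i hi, ← h.fold_symm (i := i) (by omega),
      ← h.fold_symm (i := i + 2) (by omega), add_comm]
    congr 4 <;> omega

lemma isIntegral_charpoly_coeff_add_single (h : IsPendantOddCycle G m p v w)
    (hper : IsPeriodic G) (hpos : ∀ x, 0 < G.degree x)
    (i : ℕ) : IsIntegral ℤ ((corner (foldedWeights G p) (stem m p m) +
      Matrix.single (p m) (p m) 1).charpoly.coeff i) := by
  refine isIntegral_charpoly_coeff _ (fun f μ hf0 hf => ?_) i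
  by_cases hμ : μ = 0
  · exact hμ ▸ isIntegral_zero
  refine hper.isIntegral_of_doubledTransition_mulVec hpos _ μ (fun h0 => hf0 ?_)
    (h.doubledTransition_mulVec_fold f μ hμ hf)
  ext x
  by_cases hx : x ∈ stem m p m
  · simpa [fold_of_mem hx] using congr_fun h0 x
  · exact h.eq_zero_of_notMem_stem f μ hμ hf hx

lemma isIntegral_charpoly_coeff_stem_mid (h : IsPendantOddCycle G m p v w)
    (hper : IsPeriodic G) (hpos : ∀ x, 0 < G.degree x)
    (hconn : G.Connected) (hcard : Fintype.card V = G.edgeFinset.card) (i : ℕ) :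
    IsIntegral ℤ ((corner (foldedWeights G p) (stem m p m)).charpoly.coeff i) ∧
      IsIntegral ℤ ((corner (foldedWeights G p) (stem m p m \ {p m})).charpoly.coeff i) := by
  have hN := h.isIntegral_charpoly_coeff_add_single hper hpos
  have key := X_mul_charpoly_corner_add_single (foldedWeights G p) (stem m p m) (p m)
  have hA := fun i => h.charpoly_coeff_eq_zero hconn hcard (Set.Subset.refl _) (i := i)
  have hB := fun i =>
    h.charpoly_coeff_eq_zero hconn hcard (S := stem m p m \ {p m}) Set.sdiff_subset (i := i)
  have key0 := congr_arg (coeff · 0) key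
  have keyS := fun i => congr_arg (coeff · (i + 1)) key
  simp only [coeff_sub, coeff_X_mul, coeff_X_mul_zero] at key0 keyS
  constructor
  · by_cases hi : (Fintype.card V + i) % 2 = 0
    · have := keyS i
      rw [hB (i + 1) (by omega), sub_zero] at this
      exact this ▸ hN i
    · exact hA i hi ▸ isIntegral_zero
  · rcases i with _ | i
    · rw [zero_sub, zero_eq_neg] at key0
      exact key0 ▸ isIntegral_zero
    · by_cases hi : (Fintype.card V + (i + 1)) % 2 = 0
      · have := keyS i
        rw [hA i (by omega), zero_sub] at this
        rw [← neg_neg (coeff _ _), ← this]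
        exact (hN i).neg
      · exact hB _ hi ▸ isIntegral_zero

lemma isIntegral_charpoly_coeff_stem (h : IsPendantOddCycle G m p v w)
    (hper : IsPeriodic G) (hpos : ∀ x, 0 < G.degree x)
    (hconn : G.Connected) (hcard : Fintype.card V = G.edgeFinset.card) {j : ℕ} (hj : j ≤ m) :
    ∀ i, IsIntegral ℤ ((corner (foldedWeights G p) (stem m p j)).charpoly.coeff i) ∧
      IsIntegral ℤ ((corner (foldedWeights G p) (stem m p j \ {p j})).charpoly.coeff i) := by
  induction hj using Nat.decreasingInduction with
  | self => exact h.isIntegral_charpoly_coeff_stem_mid hper hpos hconn hcard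
  | of_succ j hj ih =>
    intro i
    rw [stem_succ_sdiff m p (by omega)] at ih
    refine ⟨(ih i).2, ?_⟩
    rw [show (corner (foldedWeights G p) (stem m p j \ {p j})).charpoly =
      X ^ 2 * (corner (foldedWeights G p) (stem m p j)).charpoly -
        X ^ 2 * (corner (foldedWeights G p) (stem m p (j + 1))).charpoly by
      rw [h.X_sq_mul_charpoly_stem hj]; ring]
    rw [coeff_sub, coeff_X_pow_mul', coeff_X_pow_mul']
    split_ifs
    · exact (ih _).2.sub (ih _).1
    · exact isIntegral_zero.sub isIntegral_zero

lemma sum_corner_mul_corner (h : IsPendantOddCycle G m p v w) :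
    ∑ y, corner (foldedWeights G p) (stem m p 0) (p 0) y *
      corner (foldedWeights G p) (stem m p 0) y (p 0) =
      1 / (G.degree v : ℂ) + 1 / (G.degree w : ℂ) := by
  have hp := h.pos
  have h0 : p 0 ∈ stem m p 0 := h.mem_stem le_rfl (by omega)
  have hpend : ∀ y, G.Adj (p 0) y → y ∈ stem m p 0 →
      corner (foldedWeights G p) (stem m p 0) (p 0) y *
        corner (foldedWeights G p) (stem m p 0) y (p 0) = 1 / (G.degree y : ℂ) := by
    intro y hy hyS
    have hy1 : y ≠ p 1 := hyS 1 (by omega) (by omega)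
    have hy0 : y ≠ p 0 := hy.ne'
    simp [corner_apply, foldedWeights_apply, doubledTransition_apply, h0, hyS, hy1, hy0, hy,
      hy.symm, h.degree_zero]
    ring
  have hv : v ∈ stem m p 0 := fun i _ hi => h.left_ne i hi
  have hw : w ∈ stem m p 0 := fun i _ hi => h.right_ne i hi
  rw [← hpend v ((h.adj_zero v).2 (by simp)) hv, ← hpend w ((h.adj_zero w).2 (by simp)) hw,
    ← Finset.sum_pair (f := fun y => corner (foldedWeights G p) (stem m p 0) (p 0) y *
      corner (foldedWeights G p) (stem m p 0) y (p 0)) h.left_ne_right]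
  symm
  refine Finset.sum_subset (Finset.subset_univ _) fun y _ hy => ?_
  rw [Finset.mem_insert, Finset.mem_singleton, not_or] at hy
  rw [corner_apply]
  split_ifs with hyS
  · rw [h.foldedWeights_eq_zero, zero_mul]
    intro hadj
    rcases (h.adj_zero y).1 hadj with rfl | rfl | rfl | rfl
    · exact notMem_stem m p (by omega) (by omega) hyS.2
    · exact notMem_stem m p (by omega) le_rfl hyS.2
    · exact hy.1 rfl
    · exact hy.2 rfl
  · exact zero_mul _

lemma isIntegral_inv_degree_add (h : IsPendantOddCycle G m p v w)
    (hper : IsPeriodic G) (hpos : ∀ x, 0 < G.degree x)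
    (hconn : G.Connected) (hcard : Fintype.card V = G.edgeFinset.card) :
    IsIntegral ℤ (1 / (G.degree v : ℂ) + 1 / (G.degree w : ℂ)) := by
  have hV : 2 ≤ Fintype.card V :=
    Fintype.one_lt_card_iff.2 ⟨v, w, h.left_ne_right⟩
  have hdiag : ∀ S, (corner (foldedWeights G p) S).trace = 0 := fun S =>
    Finset.sum_eq_zero fun x _ => by
      rw [diag_apply, corner_apply, h.foldedWeights_eq_zero (G.irrefl), ite_self]
  have h1 := two_mul_charpoly_coeff (corner (foldedWeights G p) (stem m p 0)) hV
  have h2 := two_mul_charpoly_coeff (corner (foldedWeights G p) (stem m p 0 \ {p 0})) hV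
  rw [hdiag] at h1 h2
  rw [trace_corner_mul_corner _ _ (p 0) (h.foldedWeights_eq_zero (G.irrefl)),
    h.sum_corner_mul_corner] at h1
  have hI := h.isIntegral_charpoly_coeff_stem hper hpos hconn hcard (Nat.zero_le m)
    (Fintype.card V - 2)
  rw [show 1 / (G.degree v : ℂ) + 1 / (G.degree w : ℂ) =
      (corner (foldedWeights G p) (stem m p 0 \ {p 0})).charpoly.coeff (Fintype.card V - 2) -
        (corner (foldedWeights G p) (stem m p 0)).charpoly.coeff (Fintype.card V - 2) by
    linear_combination (h1 - h2) / 2]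
  exact hI.2.sub hI.1

end IsPendantOddCycle
end Loop

/-- A sum of two unit fractions is an integer only for `1 / 1 + 1 / 1` and `1 / 2 + 1 / 2`. -/
lemma eq_and_eq_one_or_eq_two_of_isIntegral {a b : ℕ} (ha : 0 < a) (hb : 0 < b)
    (h : IsIntegral ℤ (1 / (a : ℂ) + 1 / (b : ℂ))) : a = b ∧ (a = 1 ∨ a = 2) := by
  have hq : IsIntegral ℤ (1 / (a : ℚ) + 1 / (b : ℚ)) := by
    rw [← isIntegral_algebraMap_iff (algebraMap ℚ ℂ).injective]
    simpa using h
  obtain ⟨z, hz⟩ := IsIntegrallyClosed.isIntegral_iff.1 hq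
  have ha' : (a : ℚ) ≠ 0 := by positivity
  have hb' : (b : ℚ) ≠ 0 := by positivity
  have hz' : (z : ℚ) * (a * b) = a + b := by
    rw [eq_intCast] at hz
    rw [hz]
    field_simp
    ring
  have hz'' : z * (a * b) = (a : ℤ) + b := by exact_mod_cast hz'
  have hab : a ∣ b := by
    have : (a : ℤ) ∣ b := ⟨z * b - 1, by linear_combination -hz''⟩
    exact_mod_cast this
  have hba : b ∣ a := by
    have : (b : ℤ) ∣ a := ⟨z * a - 1, by linear_combination -hz''⟩
    exact_mod_cast this
  obtain rfl := Nat.dvd_antisymm hab hba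
  refine ⟨rfl, (Nat.dvd_prime Nat.prime_two).1 ?_⟩
  have h2 : z * a = 2 := by
    have : (a : ℤ) ≠ 0 := by positivity
    apply mul_right_cancel₀ this
    linear_combination hz''
  have : (a : ℤ) ∣ (2 : ℕ) := ⟨z, by push_cast; linear_combination -h2⟩
  exact_mod_cast this

/-- The vertices of a cycle indexed by `ZMod (2 * m + 1)` with two pendant neighbors at `c 0`. -/
lemma isPendantOddCycle_of_zmod {V : Type*} [Fintype V] {G : SimpleGraph V} {m : ℕ} (hm : 0 < m)
    {c : ZMod (2 * m + 1) → V} (hcinj : Function.Injective c)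
    (hcadj : ∀ i, G.Adj (c i) (c (i + 1))) (hdegu : G.degree (c 0) = 4)
    (hdegc : ∀ i, i ≠ 0 → G.degree (c i) = 2) {v w : V} (hv : G.Adj (c 0) v)
    (hw : G.Adj (c 0) w) (hvc : v ∉ Set.range c) (hwc : w ∉ Set.range c) (hvw : v ≠ w) :
    IsPendantOddCycle G m (fun i => c i) v w := by
  have hcast : ∀ i j : ℕ, i ≤ 2 * m → j ≤ 2 * m → (i : ZMod (2 * m + 1)) = j → i = j := by
    intro i j hi hj hij
    rw [ZMod.natCast_eq_natCast_iff'] at hij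
    rwa [Nat.mod_eq_of_lt (by omega), Nat.mod_eq_of_lt (by omega)] at hij
  have hinj : ∀ i j : ℕ, i ≤ 2 * m → j ≤ 2 * m → c i = c j → i = j :=
    fun i j hi hj hij => hcast i j hi hj (hcinj hij)
  have hne : ∀ i < 2 * m, ((i + 1 : ℕ) : ZMod (2 * m + 1)) ≠ 0 := fun i hi h0 =>
    absurd (hcast (i + 1) 0 hi (by omega) (by rw [h0, Nat.cast_zero])) (by omega)
  have hclosed : c ((2 * m + 1 : ℕ) : ZMod (2 * m + 1)) = c ((0 : ℕ) : ZMod (2 * m + 1)) := by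
    rw [ZMod.natCast_self, Nat.cast_zero]
  have hadj : ∀ i : ℕ, G.Adj (c i) (c ((i + 1 : ℕ) : ZMod (2 * m + 1))) := fun i => by
    simpa using hcadj i
  have hnbr : ∀ (x : V) (s : Finset V), (∀ y ∈ s, G.Adj x y) → G.degree x ≤ s.card →
      ∀ y, G.Adj x y ↔ y ∈ s := by
    intro x s hs hcard y
    have : s = G.neighborFinset x :=
      Finset.eq_of_subset_of_card_le (fun y hy => by simpa using hs y hy) (by simpa using hcard)
    rw [this, SimpleGraph.mem_neighborFinset]
  have hvne : ∀ i : ℕ, v ≠ c i := fun i e => hvc ⟨_, e.symm⟩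
  have hwne : ∀ i : ℕ, w ≠ c i := fun i e => hwc ⟨_, e.symm⟩
  refine
    { pos := hm
      inj := hinj
      closed := hclosed
      adj_zero := fun x => ?_
      adj_succ := fun i hi x => ?_
      degree_zero := by rw [Nat.cast_zero, hdegu]
      degree_succ := fun i hi => hdegc _ (hne i hi)
      left_ne := fun i _ => hvne i
      right_ne := fun i _ => hwne i
      left_ne_right := hvw }
  · have h12 : c (1 : ℕ) ≠ c (2 * m : ℕ) := fun e =>
      absurd (hinj _ _ (by omega) le_rfl e) (by omega)
    rw [hnbr _ {c (1 : ℕ), c (2 * m : ℕ), v, w}]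
    · simp
    · intro y hy
      simp only [Finset.mem_insert, Finset.mem_singleton] at hy
      rcases hy with rfl | rfl | rfl | rfl
      · exact hadj 0
      · rw [← hclosed]
        exact (hadj (2 * m)).symm
      · simpa using hv
      · simpa using hw
    · rw [Finset.card_insert_of_notMem, Finset.card_insert_of_notMem, Finset.card_pair hvw,
        Nat.cast_zero, hdegu]
      · simp only [Finset.mem_insert, Finset.mem_singleton, not_or]
        exact ⟨(hvne _).symm, (hwne _).symm⟩
      · simp only [Finset.mem_insert, Finset.mem_singleton, not_or]
        exact ⟨h12, (hvne _).symm, (hwne _).symm⟩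
  · have h12 : c i ≠ c (i + 2 : ℕ) := by
      intro e
      rcases Nat.lt_or_ge (i + 1) (2 * m) with hi' | hi'
      · exact absurd (hinj _ _ hi.le hi' e) (by omega)
      · rw [show i + 2 = 2 * m + 1 by omega, hclosed] at e
        exact absurd (hinj _ _ hi.le (by omega) e) (by omega)
    rw [hnbr _ {c i, c (i + 2 : ℕ)}]
    · simp
    · intro y hy
      simp only [Finset.mem_insert, Finset.mem_singleton] at hy
      rcases hy with rfl | rfl
      · exact (hadj i).symm
      · exact hadj (i + 1)
    · rw [Finset.card_pair h12, hdegc _ (hne i hi)]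

/-- In the cycle-plus-tree setting, let `v₁` and `w₁` be the two neighbors
of `u = c 0` off the cycle. If `G` is periodic, then `deg v₁ = deg w₁` and this common
degree is `1` or `2`. -/
theorem degree_firstNeighbors {V : Type*} [Fintype V] [DecidableEq V] (G : SimpleGraph V)
    (hconn : G.Connected) (k : ℕ) [NeZero k] (hk3 : 3 ≤ k) (hkodd : Odd k)
    (c : ZMod k → V) (hcinj : Function.Injective c)
    (hcadj : ∀ i : ZMod k, G.Adj (c i) (c (i + 1)))
    (hcard : Fintype.card V = G.edgeFinset.card)
    (hdegu : G.degree (c 0) = 4) (hdegc : ∀ i : ZMod k, i ≠ 0 → G.degree (c i) = 2)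
    (v1 w1 : V) (hv1 : G.Adj (c 0) v1) (hw1 : G.Adj (c 0) w1)
    (hv1c : v1 ∉ Set.range c) (hw1c : w1 ∉ Set.range c) (hvw : v1 ≠ w1)
    (hper : IsPeriodic G) :
    G.degree v1 = G.degree w1 ∧ (G.degree v1 = 1 ∨ G.degree v1 = 2) := by
  obtain ⟨m, rfl⟩ := hkodd
  have hp := isPendantOddCycle_of_zmod (by omega) hcinj hcadj hdegu hdegc hv1 hw1 hv1c hw1c hvw
  have : Nontrivial V := ⟨v1, w1, hvw⟩
  have hpos : ∀ x, 0 < G.degree x := fun x => hconn.preconnected.degree_pos_of_nontrivial x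
  exact eq_and_eq_one_or_eq_two_of_isIntegral (hpos v1) (hpos w1)
    (hp.isIntegral_inv_degree_add hper hpos hconn (by convert hcard))

end GroverPaper
end
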